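/- Consider the classical risk model where the claim amounts have distribution F_X(u) = Σ_{i=1}^n p_i F_{α_i,β_i}(u), a finite mixture of Gamma(α_i, β_i) distributions with weights p_i > 0 summing to 1, shape parameters α_i ≥ 1 and scale parameters β_i > 0; set μ := Σ_{i=1}^n p_i α_i/β_i. Let 0 < φ < 1 and let ψ be the locally bounded solution of ψ(u) = φ ( ∫₀^u ψ(u−y) (1−F_X(y))/μ dy + ∫_u^∞ (1−F_X(y))/μ dy ), u ≥ 0 (the ruin probability). Then ψ is continuous on [0,∞), four times continuously differentiable on (0,∞), and sup_{u>0} |ψ''(u)| < ∞, sup_{u>0} |u ψ'''(u)| < ∞, sup_{u>0} |u² ψ^{(4)}(u)| < ∞ (i.e. ψ ∈ D₁); consequently, for every t > 0, sup_{u ≥ 0} |M_t^{[2]} ψ(u) − ψ(u)| ≤ (1/(8t²)) sup|ψ''| + (1/(6t²)) sup|u ψ'''(u)| + (9/(16t²)) sup|u² ψ^{(4)}(u)| < ∞. -/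

import Mathlib

open MeasureTheory Filter Topology
open scoped ENNReal

/-- The distribution function of a `Gamma(a, b)` random variable
(`a` shape, `b` rate): `∫₀^u b^a y^{a-1} e^{-by} / Γ(a) dy`. -/
noncomputable def gammaCDF (a b : ℝ) (u : ℝ) : ℝ :=
  ∫ y in (0:ℝ)..u, b ^ a * y ^ (a - 1) * Real.exp (-b * y) / Real.Gamma a

/-- The gamma-type operator `L_t* g(u) = E[g(S(⌊tu⌋+1)/t)]
= ∫₀^∞ g(x) t^{⌊tu⌋+1} x^{⌊tu⌋} e^{-tx}/⌊tu⌋! dx`. -/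
noncomputable def Lstar (t : ℝ) (g : ℝ → ℝ) (u : ℝ) : ℝ :=
  ∫ x in Set.Ioi (0:ℝ),
    g x * (t ^ (⌊t * u⌋₊ + 1) * x ^ ⌊t * u⌋₊ * Real.exp (-t * x)
      / ((⌊t * u⌋₊).factorial : ℝ))

/-- The accelerated approximation on the grid `{k/t : k ∈ ℕ}`. -/
noncomputable def Mgrid (t : ℝ) (g : ℝ → ℝ) : ℕ → ℝ
  | 0 => g 0
  | k + 1 => 2 * Lstar (2 * t) g ((2 * (k : ℝ) + 1) / (2 * t))
      - Lstar t g ((k : ℝ) / t)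

/-- The accelerated approximation `M_t^{[2]} g`, extended from the grid by linear
interpolation (the formula reproduces the grid values when `tu ∈ ℕ`). -/
noncomputable def Mt2 (t : ℝ) (g : ℝ → ℝ) (u : ℝ) : ℝ :=
  (t * u - (⌊t * u⌋₊ : ℝ)) * Mgrid t g (⌊t * u⌋₊ + 1)
    + ((⌊t * u⌋₊ : ℝ) + 1 - t * u) * Mgrid t g ⌊t * u⌋₊

/-!
`L*_t g((k-1)/t)` and `L*_{2t} g((2k-1)/(2t))` are expectations of `g` under gamma laws of mean
`k/t` and variances `k/t²` and `k/(2t²)`. In a Taylor expansion of `g` at the mean, the combination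
`2 L*_{2t} - L*_t` therefore has no second order term, and what is left is controlled by the bounds
on `u g'''` and `u² g⁗`; the bound on `g''` only enters through the linear interpolation.

The ruin probability solves a renewal equation `ψ = h + k ⋆ ψ` whose kernel `k` decays exponentially
and has mass `φ < 1`. Local boundedness forces `ψ` to be measurable, hence continuous, and since a
small exponential tilt of `k` still has mass `< 1`, `ψ` decays exponentially. The higher derivatives
of `k` may blow up at `0`, like those of `u ^ (a - 1)`. This is invisible to the Euler operator
`θ = u d/du`, for which `θ (f ⋆ g) = f ⋆ g + θf ⋆ g + f ⋆ θg` without boundary terms; applied to the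
equation for `ψ''` this rule bounds `θ ψ''` and `θ² ψ''`, hence `u ψ'''` and `u² ψ⁗`.
-/

open ProbabilityTheory

/-! ### Taylor expansion with weighted remainder -/

lemma isMinOn_of_sub_mul_deriv_nonneg {f f' : ℝ → ℝ} {s : Set ℝ} {c : ℝ} (hs : s.OrdConnected)
    (hc : c ∈ s) (hf : ∀ x ∈ s, HasDerivAt f (f' x) x) (h : ∀ x ∈ s, 0 ≤ (x - c) * f' x) :
    IsMinOn f s c := by
  have hcont : ContinuousOn f s := fun x hx => (hf x hx).continuousAt.continuousWithinAt
  refine isMinOn_iff.2 fun x hx => ?_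
  rcases lt_trichotomy x c with hxc | rfl | hcx
  · have hsub := hs.out hx hc
    obtain ⟨y, hy, hslope⟩ := exists_hasDerivAt_eq_slope f f' hxc (hcont.mono hsub)
      fun y hy => hf y (hsub (Set.Ioo_subset_Icc_self hy))
    have hy' : f' y ≤ 0 :=
      nonpos_of_mul_nonneg_right (h y (hsub (Set.Ioo_subset_Icc_self hy))) (sub_neg.2 hy.2)
    rw [hslope, div_le_iff₀ (sub_pos.2 hxc), zero_mul] at hy'
    exact sub_nonpos.1 hy'
  · exact le_rfl
  · have hsub := hs.out hc hx
    obtain ⟨y, hy, hslope⟩ := exists_hasDerivAt_eq_slope f f' hcx (hcont.mono hsub)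
      fun y hy => hf y (hsub (Set.Ioo_subset_Icc_self hy))
    have hy' : 0 ≤ f' y :=
      nonneg_of_mul_nonneg_right (h y (hsub (Set.Ioo_subset_Icc_self hy))) (sub_pos.2 hy.1)
    rw [hslope, le_div_iff₀ (sub_pos.2 hcx), zero_mul] at hy'
    exact sub_nonneg.1 hy'

/-- The closed form of `∫ s in 1..r, (r - s) ^ 3 / (6 * s ^ 2)`: the size at `r` of the third order
Taylor remainder at `1` of a function whose fourth derivative at `s` is `s⁻²`. -/
noncomputable def taylorWeight (r : ℝ) : ℝ :=
  r ^ 3 / 6 + r ^ 2 / 4 - r / 2 + 1 / 12 - r ^ 2 / 2 * Real.log r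

lemma taylorWeight_one : taylorWeight 1 = 0 := by
  norm_num [taylorWeight]

lemma hasDerivAt_taylorWeight_div_sq {r : ℝ} (hr : 0 < r) :
    HasDerivAt (fun r => taylorWeight r / r ^ 2) ((r - 1) ^ 3 / (6 * r ^ 3)) r := by
  have hid := hasDerivAt_id' r
  have hderiv : HasDerivAt (fun r => r / 6 + 1 / 4 - r⁻¹ / 2 + (r ^ 2)⁻¹ / 12 - Real.log r / 2)
      (1 / 6 - (-(r ^ 2)⁻¹) / 2 + (-(2 * r) / (r ^ 2) ^ 2) / 12 - r⁻¹ / 2) r := by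
    have hsq : HasDerivAt (fun r : ℝ => r ^ 2) (2 * r) r := by simpa using hasDerivAt_pow 2 r
    exact ((((hid.div_const 6).add_const _).sub ((hasDerivAt_inv hr.ne').div_const 2)).add
      ((hsq.fun_inv (by positivity)).div_const 12)).sub
      ((Real.hasDerivAt_log hr.ne').div_const 2)
  refine (hderiv.congr_deriv ?_).congr_of_eventuallyEq ?_
  · field_simp
    ring
  · filter_upwards [lt_mem_nhds hr] with y hy
    simp only [taylorWeight]
    field_simp

lemma taylorWeight_le_of_hasDerivAt {q q' : ℝ → ℝ} (hq : ∀ r, 0 < r → HasDerivAt q (q' r) r)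
    (hq1 : q 1 = 0)
    (h : ∀ r, 0 < r → 0 ≤ (r - 1) * (6 * (r * q' r - 2 * q r) - (r - 1) ^ 3)) {r : ℝ}
    (hr : 0 < r) : taylorWeight r ≤ q r := by
  have hmin : IsMinOn (fun r => q r / r ^ 2 - taylorWeight r / r ^ 2) (Set.Ioi 0) 1 := by
    refine isMinOn_of_sub_mul_deriv_nonneg Set.ordConnected_Ioi (Set.mem_Ioi.2 one_pos)
      (fun s (hs : 0 < s) => ((hq s hs).div (hasDerivAt_pow 2 s) (by positivity)).sub
        (hasDerivAt_taylorWeight_div_sq hs)) fun s (hs : 0 < s) => ?_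
    have hquot := div_nonneg (h s hs) (show 0 ≤ 6 * s ^ 3 by positivity)
    refine hquot.trans_eq ?_
    field_simp
    simp
    ring
  have hr_min := isMinOn_iff.1 hmin r hr
  simp only [hq1, taylorWeight_one, zero_div, sub_zero, sub_nonneg] at hr_min
  exact (div_le_div_iff_of_pos_right (by positivity)).1 hr_min

lemma taylorWeight_nonneg {r : ℝ} (hr : 0 < r) : 0 ≤ taylorWeight r := by
  have hmin : IsMinOn (fun r => taylorWeight r / r ^ 2) (Set.Ioi 0) 1 :=
    isMinOn_of_sub_mul_deriv_nonneg Set.ordConnected_Ioi (Set.mem_Ioi.2 one_pos)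
      (fun s hs => hasDerivAt_taylorWeight_div_sq hs) fun s (hs : 0 < s) => by
        rw [show (s - 1) * ((s - 1) ^ 3 / (6 * s ^ 3)) = (s - 1) ^ 4 / (6 * s ^ 3) by ring]
        positivity
  have hr_min := isMinOn_iff.1 hmin r hr
  simp only [taylorWeight_one, zero_div] at hr_min
  simpa using (le_div_iff₀ (by positivity)).1 hr_min

lemma taylorWeight_le_quartic {r : ℝ} (hr : 0 < r) : taylorWeight r ≤ (r - 1) ^ 4 / 12 := by
  refine taylorWeight_le_of_hasDerivAt (q := fun r => (r - 1) ^ 4 / 12)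
    (q' := fun r => (r - 1) ^ 3 / 3) (fun s _ => ?_) (by norm_num) (fun s _ => ?_) hr
  · convert! (((hasDerivAt_id' s).sub_const 1).pow 4).div_const 12 using 1
    norm_num
    ring
  · have : 0 ≤ (s - 1) ^ 4 * s := by positivity
    nlinarith

lemma taylorWeight_le_quadratic_add_quartic {r : ℝ} (hr : 0 < r) :
    taylorWeight r ≤ (r - 1) ^ 2 / 20 + (r - 1) ^ 4 / 30 := by
  refine taylorWeight_le_of_hasDerivAt (q := fun r => (r - 1) ^ 2 / 20 + (r - 1) ^ 4 / 30)
    (q' := fun r => (r - 1) / 10 + 2 * (r - 1) ^ 3 / 15) (fun s _ => ?_) (by norm_num)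
    (fun s hs => ?_) hr
  · convert! ((((hasDerivAt_id' s).sub_const 1).pow 2).div_const 20).add
      ((((hasDerivAt_id' s).sub_const 1).pow 4).div_const 30) using 1
    norm_num
    ring
  · rw [show (s - 1) * (6 * (s * ((s - 1) / 10 + 2 * (s - 1) ^ 3 / 15)
        - 2 * ((s - 1) ^ 2 / 20 + (s - 1) ^ 4 / 30)) - (s - 1) ^ 3)
      = (s - 1) ^ 2 * s * (2 * s ^ 2 - 7 * s + 8) / 5 by ring]
    have : 0 ≤ 2 * s ^ 2 - 7 * s + 8 := by nlinarith [sq_nonneg (4 * s - 7)]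
    positivity

lemma exists_sub_taylor_eq_of_isOpen {g G G' : ℝ → ℝ} {s : Set ℝ} {n : ℕ} {κ x : ℝ}
    (hs : IsOpen s) (hs' : s.OrdConnected) (hg : ContDiffOn ℝ (n + 1) g s)
    (hG : ∀ y ∈ s, HasDerivAt G (G' y) y) (hG' : ∀ y ∈ s, y ≠ x → G' y ≠ 0) (hκ : κ ∈ s)
    (hx : x ∈ s) (hκx : κ ≠ x) :
    ∃ y ∈ s, y ≠ x ∧
      g x - ∑ j ∈ Finset.range (n + 1), iteratedDeriv j g κ / j.factorial * (x - κ) ^ j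
        = (x - y) ^ n / n.factorial * (G x - G κ) / G' y * iteratedDeriv (n + 1) g y := by
  have hsub : Set.uIcc κ x ⊆ s := hs'.uIcc_subset hκ hx
  have hu : UniqueDiffOn ℝ (Set.uIcc κ x) := uniqueDiffOn_uIcc hκx
  have hwithin : ∀ j ≤ n + 1, ∀ y ∈ Set.uIcc κ x,
      iteratedDerivWithin j g (Set.uIcc κ x) y = iteratedDeriv j g y := fun j hj y hy =>
    iteratedDerivWithin_eq_iteratedDeriv hu
      ((hg.contDiffAt (hs.mem_nhds (hsub hy))).of_le (mod_cast hj)) hy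
  have hne : ∀ y ∈ Set.uIoo κ x, y ≠ x := by
    rintro y hy rfl
    rcases le_total κ y with h | h <;> simp [Set.uIoo, h] at hy
  obtain ⟨y, hy, hrem⟩ := taylor_mean_remainder hκx ((hg.mono hsub).of_le (mod_cast n.le_succ))
    (((hg.mono hsub).differentiableOn_iteratedDerivWithin (mod_cast n.lt_succ_self) hu).mono
      Set.Ioo_subset_Icc_self)
    (fun y hy => (hG y (hsub hy)).continuousAt.continuousWithinAt)
    (fun y hy => hG y (hsub (Set.Ioo_subset_Icc_self hy)))
    (fun y hy => hG' y (hsub (Set.Ioo_subset_Icc_self hy)) (hne y hy))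
  have hy' := Set.Ioo_subset_Icc_self hy
  refine ⟨y, hsub hy', hne y hy, ?_⟩
  rw [hwithin _ le_rfl y hy', smul_eq_mul] at hrem
  rw [← hrem, taylor_within_apply]
  congr 1
  refine Finset.sum_congr rfl fun j hj => ?_
  rw [hwithin j (Finset.mem_range.1 hj).le κ Set.left_mem_uIcc, smul_eq_mul]
  ring

lemma abs_sub_taylor_le_taylorWeight {g : ℝ → ℝ} {M κ x : ℝ} (hg : ContDiffOn ℝ 4 g (Set.Ioi 0))
    (hM : ∀ y, 0 < y → |y ^ 2 * iteratedDeriv 4 g y| ≤ M) (hκ : 0 < κ) (hx : 0 < x) :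
    |g x - ∑ j ∈ Finset.range 4, iteratedDeriv j g κ / j.factorial * (x - κ) ^ j|
      ≤ M * κ ^ 2 * taylorWeight (x / κ) := by
  rcases eq_or_ne κ x with rfl | hκx
  · simp [Finset.sum_range_succ, div_self hκ.ne', taylorWeight_one]
  -- An antiderivative of the kernel in `taylorWeight`, as gauge in the Cauchy mean value theorem.
  let G : ℝ → ℝ := fun y => (-x ^ 3 * y⁻¹ - 3 * x ^ 2 * Real.log y + 3 * x * y - y ^ 2 / 2) / 6
  have hG : ∀ y, 0 < y → HasDerivAt G ((x - y) ^ 3 / (6 * y ^ 2)) y := fun y hy => by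
    refine ((((((hasDerivAt_inv hy.ne').const_mul (-x ^ 3)).sub
      ((Real.hasDerivAt_log hy.ne').const_mul (3 * x ^ 2))).add
      ((hasDerivAt_id' y).const_mul (3 * x))).sub
      ((hasDerivAt_pow 2 y).div_const 2)).div_const 6).congr_deriv ?_
    norm_num
    field_simp
    ring
  have hGκ : G x - G κ = κ ^ 2 * taylorWeight (x / κ) := by
    simp only [G, taylorWeight, Real.log_div hx.ne' hκ.ne']
    field_simp
    ring
  obtain ⟨y, hy : 0 < y, hyx, hrem⟩ := exists_sub_taylor_eq_of_isOpen (n := 3) isOpen_Ioi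
    Set.ordConnected_Ioi (by exact_mod_cast hg) hG
    (fun y (hy : 0 < y) hyx => div_ne_zero (pow_ne_zero 3 (sub_ne_zero.2 hyx.symm))
      (by positivity)) hκ hx hκx
  have hrem' : (x - y) ^ 3 / (Nat.factorial 3) * (G x - G κ) / ((x - y) ^ 3 / (6 * y ^ 2))
      * iteratedDeriv 4 g y = y ^ 2 * iteratedDeriv 4 g y * (κ ^ 2 * taylorWeight (x / κ)) := by
    have : x - y ≠ 0 := sub_ne_zero.2 hyx.symm
    rw [hGκ]
    norm_num [Nat.factorial]
    field_simp
  rw [hrem, hrem', abs_mul, mul_assoc,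
    abs_of_nonneg (mul_nonneg (sq_nonneg κ) (taylorWeight_nonneg (div_pos hx hκ)))]
  exact mul_le_mul_of_nonneg_right (hM y hy)
    (mul_nonneg (sq_nonneg κ) (taylorWeight_nonneg (div_pos hx hκ)))

/-! ### Moments of gamma distributions -/

lemma integral_sub_pow {P : Measure ℝ} {n : ℕ} (h : ∀ i ≤ n, Integrable (fun x => x ^ i) P)
    (c : ℝ) :
    ∫ x, (x - c) ^ n ∂P
      = ∑ i ∈ Finset.range (n + 1), (∫ x, x ^ i ∂P) * (-c) ^ (n - i) * n.choose i := by
  simp only [sub_eq_add_neg, add_pow]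
  rw [integral_finsetSum _ fun i hi => ((h i (by grind)).mul_const _).mul_const _]
  simp only [integral_mul_const]

lemma abs_integral_sub_sum_centralMoment_le {P : Measure ℝ} {g Q : ℝ → ℝ} {c : ℕ → ℝ} {n : ℕ}
    (hg : AEStronglyMeasurable g P)
    (hpow : ∀ j < n, Integrable (fun x => (x - ∫ y, y ∂P) ^ j) P) (hQ : Integrable Q P)
    (h : ∀ᵐ x ∂P, |g x - ∑ j ∈ Finset.range n, c j * (x - ∫ y, y ∂P) ^ j| ≤ Q x) :
    |∫ x, g x ∂P - ∑ j ∈ Finset.range n, c j * centralMoment id j P| ≤ ∫ x, Q x ∂P := by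
  have hterm : ∀ j ∈ Finset.range n, Integrable (fun x => c j * (x - ∫ y, y ∂P) ^ j) P :=
    fun j hj => (hpow j (Finset.mem_range.1 hj)).const_mul (c j)
  have hsum := integrable_finsetSum _ hterm
  have hdiff : Integrable
      (fun x => g x - ∑ j ∈ Finset.range n, c j * (x - ∫ y, y ∂P) ^ j) P :=
    hQ.mono' (hg.sub hsum.aestronglyMeasurable) h
  have hg' : Integrable g P := (hdiff.add hsum).congr (by simp [Pi.add_def])
  calc |∫ x, g x ∂P - ∑ j ∈ Finset.range n, c j * centralMoment id j P|
      = |∫ x, (g x - ∑ j ∈ Finset.range n, c j * (x - ∫ y, y ∂P) ^ j) ∂P| := by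
        rw [integral_sub hg' hsum, integral_finsetSum _ hterm]
        simp [integral_const_mul, centralMoment]
    _ ≤ ∫ x, |g x - ∑ j ∈ Finset.range n, c j * (x - ∫ y, y ∂P) ^ j| ∂P :=
        abs_integral_le_integral_abs
    _ ≤ ∫ x, Q x ∂P := integral_mono_ae hdiff.abs hQ h

section GammaMeasure

variable {a r : ℝ}

lemma measurable_gammaPDF : Measurable (gammaPDF a r) :=
  (measurable_gammaPDFReal a r).ennreal_ofReal

lemma gammaPDFReal_mul_ae_eq_indicator (g : ℝ → ℝ) :
    (fun x => gammaPDFReal a r x * g x)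
      =ᵐ[volume] (Set.Ioi 0).indicator fun x => g x * gammaPDFReal a r x := by
  filter_upwards [(measure_eq_zero_iff_ae_notMem (μ := volume)).1 (Real.volume_singleton (a := 0))]
    with x hx
  rcases lt_or_gt_of_ne hx with h | h
  · simp [Set.indicator_of_notMem, h.le, gammaPDFReal, h.not_ge]
  · simp [Set.indicator_of_mem (Set.mem_Ioi.2 h), mul_comm]

lemma integral_gammaMeasure (ha : 0 < a) (hr : 0 < r) (g : ℝ → ℝ) :
    ∫ x, g x ∂gammaMeasure a r = ∫ x in Set.Ioi 0, g x * gammaPDFReal a r x := by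
  rw [gammaMeasure, integral_withDensity_eq_integral_toReal_smul measurable_gammaPDF
    (.of_forall fun _ => ENNReal.ofReal_lt_top), ← integral_indicator measurableSet_Ioi]
  simp only [gammaPDF, ENNReal.toReal_ofReal (gammaPDFReal_nonneg ha hr _), smul_eq_mul]
  exact integral_congr_ae (gammaPDFReal_mul_ae_eq_indicator g)

lemma integrable_gammaMeasure_iff (ha : 0 < a) (hr : 0 < r) {g : ℝ → ℝ} :
    Integrable g (gammaMeasure a r)
      ↔ IntegrableOn (fun x => g x * gammaPDFReal a r x) (Set.Ioi 0) := by
  rw [gammaMeasure, integrable_withDensity_iff_integrable_smul' measurable_gammaPDF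
    (.of_forall fun _ => ENNReal.ofReal_lt_top), ← integrable_indicator_iff measurableSet_Ioi]
  simp only [gammaPDF, ENNReal.toReal_ofReal (gammaPDFReal_nonneg ha hr _), smul_eq_mul]
  exact integrable_congr (gammaPDFReal_mul_ae_eq_indicator g)

lemma mul_gammaPDFReal {x : ℝ} (ha : 0 < a) (hr : 0 < r) (hx : 0 < x) :
    x * gammaPDFReal a r x = a / r * gammaPDFReal (a + 1) r x := by
  have hΓ := (Real.Gamma_pos_of_pos ha).ne'
  simp only [gammaPDFReal, if_pos hx.le, Real.Gamma_add_one ha.ne', Real.rpow_add_one hr.ne',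
    add_sub_cancel_right, Real.rpow_sub_one hx.ne']
  field_simp

lemma integrable_mul_gammaMeasure (ha : 0 < a) (hr : 0 < r) {g : ℝ → ℝ}
    (hg : Integrable g (gammaMeasure (a + 1) r)) :
    Integrable (fun x => x * g x) (gammaMeasure a r) := by
  rw [integrable_gammaMeasure_iff (by positivity) hr] at hg ⊢
  refine IntegrableOn.congr_fun (hg.const_mul (a / r)) (fun x hx => ?_) measurableSet_Ioi
  linear_combination (-g x) * mul_gammaPDFReal ha hr hx

lemma integral_mul_gammaMeasure (ha : 0 < a) (hr : 0 < r) (g : ℝ → ℝ) :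
    ∫ x, x * g x ∂gammaMeasure a r = a / r * ∫ x, g x ∂gammaMeasure (a + 1) r := by
  rw [integral_gammaMeasure ha hr, integral_gammaMeasure (by positivity) hr, ← integral_const_mul]
  refine setIntegral_congr_fun measurableSet_Ioi fun x hx => ?_
  linear_combination g x * mul_gammaPDFReal ha hr hx

lemma integrable_pow_gammaMeasure (ha : 0 < a) (hr : 0 < r) (n : ℕ) :
    Integrable (fun x => x ^ n) (gammaMeasure a r) := by
  induction n generalizing a with
  | zero =>
    have := isProbabilityMeasure_gammaMeasure ha hr
    simp
  | succ n ih =>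
    simpa only [pow_succ'] using integrable_mul_gammaMeasure ha hr (ih (by positivity))

lemma integral_pow_succ_gammaMeasure (ha : 0 < a) (hr : 0 < r) (n : ℕ) :
    ∫ x, x ^ (n + 1) ∂gammaMeasure a r = a / r * ∫ x, x ^ n ∂gammaMeasure (a + 1) r := by
  simpa only [pow_succ'] using integral_mul_gammaMeasure ha hr (· ^ n)

lemma integral_pow_zero_gammaMeasure (ha : 0 < a) (hr : 0 < r) :
    ∫ x, x ^ 0 ∂gammaMeasure a r = 1 := by
  have := isProbabilityMeasure_gammaMeasure ha hr
  simp

lemma integral_id_gammaMeasure (ha : 0 < a) (hr : 0 < r) : ∫ x, x ∂gammaMeasure a r = a / r := by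
  have := isProbabilityMeasure_gammaMeasure (show 0 < a + 1 by positivity) hr
  simpa using integral_pow_succ_gammaMeasure ha hr 0

lemma integrable_sub_pow_gammaMeasure (ha : 0 < a) (hr : 0 < r) (c : ℝ) (n : ℕ) :
    Integrable (fun x => (x - c) ^ n) (gammaMeasure a r) := by
  simp only [sub_eq_add_neg, add_pow]
  exact integrable_finsetSum _ fun i _ =>
    ((integrable_pow_gammaMeasure ha hr i).mul_const _).mul_const _

lemma integral_sub_mean_pow_gammaMeasure (ha : 0 < a) (hr : 0 < r) (n : ℕ) :
    ∫ x, (x - a / r) ^ n ∂gammaMeasure a r = centralMoment id n (gammaMeasure a r) := by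
  rw [← integral_id_gammaMeasure ha hr]
  rfl

lemma centralMoment_gammaMeasure (ha : 0 < a) (hr : 0 < r) (n : ℕ) :
    centralMoment id n (gammaMeasure a r) = ∑ i ∈ Finset.range (n + 1),
      (∫ x, x ^ i ∂gammaMeasure a r) * (-(a / r)) ^ (n - i) * n.choose i := by
  rw [← integral_sub_mean_pow_gammaMeasure ha hr,
    integral_sub_pow fun i _ => integrable_pow_gammaMeasure ha hr i]

lemma centralMoment_two_gammaMeasure (ha : 0 < a) (hr : 0 < r) :
    centralMoment id 2 (gammaMeasure a r) = a / r ^ 2 := by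
  rw [centralMoment_gammaMeasure ha hr]
  simp (disch := positivity) only [Finset.sum_range_succ, Finset.sum_range_zero,
    integral_pow_succ_gammaMeasure, integral_pow_zero_gammaMeasure]
  norm_num
  field_simp
  ring

lemma centralMoment_three_gammaMeasure (ha : 0 < a) (hr : 0 < r) :
    centralMoment id 3 (gammaMeasure a r) = 2 * a / r ^ 3 := by
  rw [centralMoment_gammaMeasure ha hr]
  simp (disch := positivity) only [Finset.sum_range_succ, Finset.sum_range_zero,
    integral_pow_succ_gammaMeasure, integral_pow_zero_gammaMeasure]
  norm_num [Nat.choose]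
  field_simp
  ring

lemma centralMoment_four_gammaMeasure (ha : 0 < a) (hr : 0 < r) :
    centralMoment id 4 (gammaMeasure a r) = (3 * a ^ 2 + 6 * a) / r ^ 4 := by
  rw [centralMoment_gammaMeasure ha hr]
  simp (disch := positivity) only [Finset.sum_range_succ, Finset.sum_range_zero,
    integral_pow_succ_gammaMeasure, integral_pow_zero_gammaMeasure]
  norm_num [Nat.choose]
  field_simp
  ring

lemma sum_range_four_mul_centralMoment_gammaMeasure (ha : 0 < a) (hr : 0 < r) (c : ℕ → ℝ) :
    ∑ j ∈ Finset.range 4, c j * centralMoment id j (gammaMeasure a r)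
      = c 0 + c 2 * (a / r ^ 2) + c 3 * (2 * a / r ^ 3) := by
  have := isProbabilityMeasure_gammaMeasure ha hr
  have hzero : centralMoment id 0 (gammaMeasure a r) = 1 := by simp [centralMoment]
  have hone : centralMoment id 1 (gammaMeasure a r) = 0 := centralMoment_one
  simp [Finset.sum_range_succ, hzero, hone, centralMoment_two_gammaMeasure ha hr,
    centralMoment_three_gammaMeasure ha hr]

lemma ae_pos_gammaMeasure : ∀ᵐ x ∂gammaMeasure a r, 0 < x := by
  rw [gammaMeasure, ae_withDensity_iff measurable_gammaPDF]
  filter_upwards [(measure_eq_zero_iff_ae_notMem (μ := volume)).1 (Real.volume_singleton (a := 0))]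
    with x hx h
  exact lt_of_le_of_ne (le_of_not_gt fun hneg => h (gammaPDF_of_neg hneg)) (Ne.symm hx)

lemma aestronglyMeasurable_gammaMeasure_of_continuousOn {g : ℝ → ℝ}
    (hg : ContinuousOn g (Set.Ioi 0)) : AEStronglyMeasurable g (gammaMeasure a r) := by
  have hpos : ∀ᵐ x ∂gammaMeasure a r, x ∈ Set.Ioi 0 := ae_pos_gammaMeasure
  rw [← Measure.restrict_eq_self_of_ae_mem hpos]
  exact hg.aestronglyMeasurable measurableSet_Ioi

lemma abs_integral_gammaMeasure_sub_le {g : ℝ → ℝ} {M α γ : ℝ} (ha : 0 < a) (hr : 0 < r)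
    (hg : ContDiffOn ℝ 4 g (Set.Ioi 0)) (hM : ∀ y, 0 < y → |y ^ 2 * iteratedDeriv 4 g y| ≤ M)
    (hw : ∀ s, 0 < s → taylorWeight s ≤ α * (s - 1) ^ 2 + γ * (s - 1) ^ 4) :
    |∫ x, g x ∂gammaMeasure a r - (g (a / r) + iteratedDeriv 2 g (a / r) / 2 * (a / r ^ 2)
        + iteratedDeriv 3 g (a / r) / 6 * (2 * a / r ^ 3))|
      ≤ M / r ^ 2 * (α * a + γ * (3 + 6 / a)) := by
  have hM0 : 0 ≤ M := (abs_nonneg _).trans (hM 1 one_pos)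
  have hmean := integral_id_gammaMeasure ha hr
  have hκ : 0 < a / r := div_pos ha hr
  have hint := integrable_sub_pow_gammaMeasure ha hr (a / r)
  have hbound : ∀ x, 0 < x →
      |g x - ∑ j ∈ Finset.range 4, iteratedDeriv j g (a / r) / j.factorial * (x - a / r) ^ j|
        ≤ M * (α * (x - a / r) ^ 2 + γ / (a / r) ^ 2 * (x - a / r) ^ 4) := fun x hx => by
    refine (abs_sub_taylor_le_taylorWeight hg hM hκ hx).trans ?_
    refine (mul_le_mul_of_nonneg_left (hw _ (div_pos hx hκ)) (by positivity)).trans_eq ?_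
    field_simp
  have hmoments := sum_range_four_mul_centralMoment_gammaMeasure ha hr
    fun j => iteratedDeriv j g (a / r) / j.factorial
  norm_num [Nat.factorial] at hmoments
  rw [← hmoments]
  refine (abs_integral_sub_sum_centralMoment_le
    (aestronglyMeasurable_gammaMeasure_of_continuousOn hg.continuousOn)
    (fun j _ => by rw [hmean]; exact hint j)
    ((((hint 2).const_mul α).add ((hint 4).const_mul (γ / (a / r) ^ 2))).const_mul M)
    (by rw [hmean]; filter_upwards [ae_pos_gammaMeasure] with x hx using hbound x hx)).trans_eq ?_
  simp only [Pi.add_apply]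
  rw [integral_const_mul, integral_add ((hint 2).const_mul α) ((hint 4).const_mul _),
    integral_const_mul, integral_const_mul, integral_sub_mean_pow_gammaMeasure ha hr,
    integral_sub_mean_pow_gammaMeasure ha hr, centralMoment_two_gammaMeasure ha hr,
    centralMoment_four_gammaMeasure ha hr]
  field_simp

end GammaMeasure

/-! ### The accelerated operator on the grid and between grid points -/

section

variable {t M₃ M₄ : ℝ} {g : ℝ → ℝ}

lemma Lstar_eq_integral_gammaMeasure (ht : 0 < t) (g : ℝ → ℝ) (u : ℝ) :
    Lstar t g u = ∫ x, g x ∂gammaMeasure (⌊t * u⌋₊ + 1) t := by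
  rw [integral_gammaMeasure (by positivity) ht, Lstar]
  refine setIntegral_congr_fun measurableSet_Ioi fun x hx => ?_
  simp only [gammaPDFReal, if_pos (Set.mem_Ioi.1 hx).le, add_sub_cancel_right, Real.rpow_natCast,
    Real.Gamma_nat_eq_factorial, neg_mul]
  norm_cast
  ring

lemma Mgrid_succ (ht : 0 < t) (g : ℝ → ℝ) (k : ℕ) :
    Mgrid t g (k + 1)
      = 2 * ∫ x, g x ∂gammaMeasure (2 * (k + 1)) (2 * t) - ∫ x, g x ∂gammaMeasure (k + 1) t := by
  have hfloor : ⌊2 * t * ((2 * (k : ℝ) + 1) / (2 * t))⌋₊ = 2 * k + 1 := by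
    rw [mul_div_cancel₀ _ (by positivity)]
    exact_mod_cast Nat.floor_natCast (2 * k + 1)
  have hfloor' : ⌊t * ((k : ℝ) / t)⌋₊ = k := by
    rw [mul_div_cancel₀ _ ht.ne', Nat.floor_natCast]
  rw [Mgrid, Lstar_eq_integral_gammaMeasure (by positivity), Lstar_eq_integral_gammaMeasure ht,
    hfloor, hfloor']
  push_cast
  ring_nf

/- Both gamma laws have mean `(k + 1) / t`, and the weights `2, -1` cancel their variances. -/
lemma abs_Mgrid_succ_sub_le {α γ : ℝ} (ht : 0 < t) (hg : ContDiffOn ℝ 4 g (Set.Ioi 0))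
    (hM₃ : ∀ y, 0 < y → |y * iteratedDeriv 3 g y| ≤ M₃)
    (hM₄ : ∀ y, 0 < y → |y ^ 2 * iteratedDeriv 4 g y| ≤ M₄)
    (hw : ∀ s, 0 < s → taylorWeight s ≤ α * (s - 1) ^ 2 + γ * (s - 1) ^ 4) (k : ℕ) :
    |Mgrid t g (k + 1) - g ((k + 1) / t)| ≤ M₃ / (6 * t ^ 2)
      + M₄ / t ^ 2 * (2 * α * (k + 1) + γ * (9 / 2 + 15 / (2 * (k + 1)))) := by
  have hk : (0 : ℝ) < k + 1 := by positivity
  set κ : ℝ := (k + 1) / t with hκ_def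
  have hκ : 0 < κ := by positivity
  have hfine := abs_integral_gammaMeasure_sub_le (a := 2 * (k + 1)) (r := 2 * t) (by positivity)
    (by positivity) hg hM₄ hw
  have hcoarse := abs_integral_gammaMeasure_sub_le hk ht hg hM₄ hw
  rw [mul_div_mul_left _ _ two_ne_zero] at hfine
  rw [← hκ_def] at hfine hcoarse
  set I₁ := ∫ x, g x ∂gammaMeasure (2 * (k + 1)) (2 * t)
  set I₂ := ∫ x, g x ∂gammaMeasure (k + 1) t
  set T₁ := g κ + iteratedDeriv 2 g κ / 2 * (2 * (k + 1) / (2 * t) ^ 2)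
    + iteratedDeriv 3 g κ / 6 * (2 * (2 * (k + 1)) / (2 * t) ^ 3)
  set T₂ := g κ + iteratedDeriv 2 g κ / 2 * ((k + 1) / t ^ 2)
    + iteratedDeriv 3 g κ / 6 * (2 * (k + 1) / t ^ 3)
  have hthird : |κ * iteratedDeriv 3 g κ / (6 * t ^ 2)| ≤ M₃ / (6 * t ^ 2) := by
    rw [abs_div, abs_of_pos (show 0 < 6 * t ^ 2 by positivity)]
    gcongr
    exact hM₃ κ hκ
  have hsplit : 2 * I₁ - I₂ - g κ
      = 2 * (I₁ - T₁) - (I₂ - T₂) - κ * iteratedDeriv 3 g κ / (6 * t ^ 2) := by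
    simp only [T₁, T₂, hκ_def]
    field_simp
    ring
  rw [Mgrid_succ ht, hsplit, sub_sub]
  rw [abs_le] at hfine hcoarse hthird ⊢
  have hcombine : M₄ / t ^ 2 * (2 * α * (k + 1) + γ * (9 / 2 + 15 / (2 * (k + 1))))
      = 2 * (M₄ / (2 * t) ^ 2 * (α * (2 * (k + 1)) + γ * (3 + 6 / (2 * (k + 1)))))
        + M₄ / t ^ 2 * (α * (k + 1) + γ * (3 + 6 / (k + 1))) := by
    field_simp
    ring
  rw [hcombine]
  constructor <;> linarith

/- The quadratic-quartic estimate is sharp enough only for `k ≤ 3`, the quartic one only for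
`4 ≤ k`. -/
lemma exists_taylorWeight_le_and_le {k : ℕ} (hk : 0 < k) :
    ∃ α γ : ℝ, (∀ s, 0 < s → taylorWeight s ≤ α * (s - 1) ^ 2 + γ * (s - 1) ^ 4) ∧
      2 * α * k + γ * (9 / 2 + 15 / (2 * k)) ≤ 9 / 16 := by
  rcases lt_or_ge k 4 with hk4 | hk4
  · refine ⟨1 / 20, 1 / 30,
      fun s hs => (taylorWeight_le_quadratic_add_quartic hs).trans_eq (by ring), ?_⟩
    interval_cases k <;> norm_num
  · refine ⟨0, 1 / 12, fun s hs => (taylorWeight_le_quartic hs).trans_eq (by ring), ?_⟩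
    have hk' : (4 : ℝ) ≤ k := mod_cast hk4
    have : 15 / (2 * (k : ℝ)) ≤ 15 / (2 * 4) := by gcongr
    linarith

lemma abs_Mgrid_sub_le (ht : 0 < t) (hg : ContDiffOn ℝ 4 g (Set.Ioi 0))
    (hM₃ : ∀ y, 0 < y → |y * iteratedDeriv 3 g y| ≤ M₃)
    (hM₄ : ∀ y, 0 < y → |y ^ 2 * iteratedDeriv 4 g y| ≤ M₄) (k : ℕ) :
    |Mgrid t g k - g (k / t)| ≤ M₃ / (6 * t ^ 2) + 9 * M₄ / (16 * t ^ 2) := by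
  have hM₃0 : 0 ≤ M₃ := (abs_nonneg _).trans (hM₃ 1 one_pos)
  have hM₄0 : 0 ≤ M₄ := (abs_nonneg _).trans (hM₄ 1 one_pos)
  rcases k with - | k
  · simp only [Mgrid, Nat.cast_zero, zero_div, sub_self, abs_zero]
    positivity
  push_cast
  obtain ⟨α, γ, hw, hconst⟩ := exists_taylorWeight_le_and_le (k := k + 1) k.succ_pos
  push_cast at hconst
  refine (abs_Mgrid_succ_sub_le ht hg hM₃ hM₄ hw k).trans ?_
  gcongr
  refine (mul_le_mul_of_nonneg_left hconst (by positivity)).trans_eq ?_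
  ring

end

lemma strongConvexOn_of_le_deriv2 {f : ℝ → ℝ} {s : Set ℝ} {m : ℝ} (hs : Convex ℝ s)
    (hf : ContinuousOn f s) (hf' : DifferentiableOn ℝ f (interior s))
    (hf'' : DifferentiableOn ℝ (deriv f) (interior s))
    (h : ∀ x ∈ interior s, m ≤ deriv^[2] f x) : StrongConvexOn s m f := by
  rw [strongConvexOn_iff_convex]
  simp only [Real.norm_eq_abs, sq_abs]
  have hsq : ∀ x : ℝ, HasDerivAt (fun x => m / 2 * x ^ 2) (m * x) x := fun x =>
    ((hasDerivAt_pow 2 x).const_mul (m / 2)).congr_deriv (by norm_num; ring)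
  have hderiv : ∀ x ∈ interior s, HasDerivAt f (deriv f x) x := fun x hx =>
    ((hf' x hx).differentiableAt (isOpen_interior.mem_nhds hx)).hasDerivAt
  have hderiv2 : ∀ x ∈ interior s, HasDerivAt (deriv f) (deriv^[2] f x) x := fun x hx =>
    ((hf'' x hx).differentiableAt (isOpen_interior.mem_nhds hx)).hasDerivAt
  refine convexOn_of_hasDerivWithinAt2_nonneg hs (hf.sub (by fun_prop))
    (f' := fun x => deriv f x - m * x) (f'' := fun x => deriv^[2] f x - m)
    (fun x hx => ((hderiv x hx).sub (hsq x)).hasDerivWithinAt)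
    (fun x hx => ?_) (fun x hx => sub_nonneg.2 (h x hx))
  exact (((hderiv2 x hx).sub ((hasDerivAt_id' x).const_mul m)).congr_deriv
    (by simp)).hasDerivWithinAt

lemma abs_combo_sub_le_of_abs_deriv2_le {f : ℝ → ℝ} {s : Set ℝ} {M : ℝ} (hs : Convex ℝ s)
    (hf : ContinuousOn f s) (hf' : DifferentiableOn ℝ f (interior s))
    (hf'' : DifferentiableOn ℝ (deriv f) (interior s))
    (h : ∀ x ∈ interior s, |deriv^[2] f x| ≤ M) {x y a b : ℝ} (hx : x ∈ s) (hy : y ∈ s)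
    (ha : 0 ≤ a) (hb : 0 ≤ b) (hab : a + b = 1) :
    |a * f x + b * f y - f (a * x + b * y)| ≤ a * b * (M / 2 * |x - y| ^ 2) := by
  have hlower := (strongConvexOn_of_le_deriv2 hs hf hf' hf''
    fun z hz => (abs_le.1 (h z hz)).1).2 hx hy ha hb hab
  have hderiv_neg : deriv (fun z => -f z) = fun z => -deriv f z := funext fun z => deriv.neg
  have hupper := (strongConvexOn_of_le_deriv2 (f := fun z => -f z) (m := -M) hs hf.neg hf'.neg
    (by rw [hderiv_neg]; exact hf''.neg) fun z hz => by
      simp only [Function.iterate_succ, Function.iterate_zero, Function.comp_apply, id_eq,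
        hderiv_neg, deriv.fun_neg]
      exact neg_le_neg (abs_le.1 (h z hz)).2).2 hx hy ha hb hab
  simp only [smul_eq_mul, Real.norm_eq_abs] at hlower hupper
  rw [abs_le]
  constructor <;> linarith

lemma abs_grid_interpolation_sub_le {t M u : ℝ} {g : ℝ → ℝ} (ht : 0 < t)
    (hg : ContinuousOn g (Set.Ici 0)) (hg' : ContDiffOn ℝ 2 g (Set.Ioi 0))
    (hM : ∀ y, 0 < y → |iteratedDeriv 2 g y| ≤ M) (hu : 0 ≤ u) :
    |(t * u - ⌊t * u⌋₊) * g ((⌊t * u⌋₊ + 1) / t) + (⌊t * u⌋₊ + 1 - t * u) * g (⌊t * u⌋₊ / t) - g u|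
      ≤ M / (8 * t ^ 2) := by
  have hM0 : 0 ≤ M := (abs_nonneg _).trans (hM 1 one_pos)
  have hδ0 : 0 ≤ t * u - ⌊t * u⌋₊ := sub_nonneg.2 (Nat.floor_le (by positivity))
  have hδ1 : 0 ≤ ⌊t * u⌋₊ + 1 - t * u := sub_nonneg.2 (Nat.lt_floor_add_one (t * u)).le
  generalize ⌊t * u⌋₊ = m at *
  have hinterp := abs_combo_sub_le_of_abs_deriv2_le (M := M) (x := (m + 1) / t) (y := m / t)
    (convex_Ici 0) hg
    (by simpa only [interior_Ici] using hg'.differentiableOn (by norm_num))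
    (by simpa only [interior_Ici] using
      (hg'.deriv_of_isOpen isOpen_Ioi (m := 1) (by norm_num)).differentiableOn (by norm_num))
    (by simpa only [interior_Ici, Set.mem_Ioi, iteratedDeriv_eq_iterate] using hM)
    (Set.mem_Ici.2 (by positivity)) (Set.mem_Ici.2 (by positivity)) hδ0 hδ1 (by ring)
  have hu_eq : (t * u - m) * ((m + 1) / t) + (m + 1 - t * u) * (m / t) = u := by
    field_simp
    ring
  have hgap : |(m + 1) / t - m / t| ^ 2 = 1 / t ^ 2 := by
    rw [← sub_div, add_sub_cancel_left, sq_abs, one_div, one_div, inv_pow]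
  rw [hu_eq, hgap] at hinterp
  have hquarter : (t * u - m) * (m + 1 - t * u) ≤ 1 / 4 := by
    nlinarith [sq_nonneg (2 * (t * u - m) - 1)]
  refine hinterp.trans ((mul_le_mul_of_nonneg_right hquarter (by positivity)).trans_eq ?_)
  field_simp
  ring

lemma abs_Mt2_sub_le {t M₂ M₃ M₄ u : ℝ} {g : ℝ → ℝ} (ht : 0 < t)
    (hg : ContinuousOn g (Set.Ici 0)) (hg' : ContDiffOn ℝ 4 g (Set.Ioi 0))
    (hM₂ : ∀ y, 0 < y → |iteratedDeriv 2 g y| ≤ M₂)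
    (hM₃ : ∀ y, 0 < y → |y * iteratedDeriv 3 g y| ≤ M₃)
    (hM₄ : ∀ y, 0 < y → |y ^ 2 * iteratedDeriv 4 g y| ≤ M₄) (hu : 0 ≤ u) :
    |Mt2 t g u - g u| ≤ M₂ / (8 * t ^ 2) + M₃ / (6 * t ^ 2) + 9 * M₄ / (16 * t ^ 2) := by
  have hinterp := abs_grid_interpolation_sub_le ht hg (hg'.of_le (by norm_num)) hM₂ hu
  have hgrid := abs_Mgrid_sub_le ht hg' hM₃ hM₄ ⌊t * u⌋₊
  have hgrid_succ := abs_Mgrid_sub_le ht hg' hM₃ hM₄ (⌊t * u⌋₊ + 1)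
  have hδ0 : 0 ≤ t * u - ⌊t * u⌋₊ := sub_nonneg.2 (Nat.floor_le (by positivity))
  have hδ1 : 0 ≤ ⌊t * u⌋₊ + 1 - t * u := sub_nonneg.2 (Nat.lt_floor_add_one (t * u)).le
  push_cast at hgrid_succ
  rw [Mt2]
  generalize ⌊t * u⌋₊ = m at *
  calc |(t * u - m) * Mgrid t g (m + 1) + (m + 1 - t * u) * Mgrid t g m - g u|
      = |(t * u - m) * (Mgrid t g (m + 1) - g ((m + 1) / t))
          + (m + 1 - t * u) * (Mgrid t g m - g (m / t))
          + ((t * u - m) * g ((m + 1) / t) + (m + 1 - t * u) * g (m / t) - g u)| := by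
        congr 1
        ring
    _ ≤ (t * u - m) * |Mgrid t g (m + 1) - g ((m + 1) / t)|
          + (m + 1 - t * u) * |Mgrid t g m - g (m / t)|
          + |(t * u - m) * g ((m + 1) / t) + (m + 1 - t * u) * g (m / t) - g u| := by
        refine (abs_add_three _ _ _).trans_eq ?_
        rw [abs_mul, abs_mul, abs_of_nonneg hδ0, abs_of_nonneg hδ1]
    _ ≤ (t * u - m) * (M₃ / (6 * t ^ 2) + 9 * M₄ / (16 * t ^ 2))
          + (m + 1 - t * u) * (M₃ / (6 * t ^ 2) + 9 * M₄ / (16 * t ^ 2)) + M₂ / (8 * t ^ 2) := by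
        gcongr
    _ = M₂ / (8 * t ^ 2) + M₃ / (6 * t ^ 2) + 9 * M₄ / (16 * t ^ 2) := by ring

/-- `sup_{u > 0} |f u|`, with value `⊤` when `f` is unbounded on `(0, ∞)`. -/
noncomputable def posSup (f : ℝ → ℝ) : ℝ≥0∞ :=
  ⨆ u ∈ Set.Ioi (0 : ℝ), (‖f u‖₊ : ℝ≥0∞)

lemma posSup_lt_top_of_abs_le {f : ℝ → ℝ} {C : ℝ} (h : ∀ u, 0 < u → |f u| ≤ C) :
    posSup f < ⊤ := by
  refine lt_of_le_of_lt (iSup₂_le fun u hu => ?_) (ENNReal.ofReal_lt_top (r := C))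
  rw [← enorm_eq_nnnorm, Real.enorm_eq_ofReal_abs]
  exact ENNReal.ofReal_le_ofReal (h u hu)

lemma abs_le_toReal_posSup {f : ℝ → ℝ} (h : posSup f < ⊤) {u : ℝ} (hu : 0 < u) :
    |f u| ≤ (posSup f).toReal := by
  rw [← Real.norm_eq_abs, ← toReal_enorm]
  exact ENNReal.toReal_mono h.ne (le_iSup₂_of_le u hu le_rfl)

/-- The class `D₁` of functions to which the accelerated approximation applies. The supremum of
`|u g'''(u)|` is required to be finite because it enters the error bound. -/
structure IsClassD1 (g : ℝ → ℝ) : Prop where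
  continuousOn : ContinuousOn g (Set.Ici 0)
  contDiffOn : ContDiffOn ℝ 4 g (Set.Ioi 0)
  posSup_two : posSup (iteratedDeriv 2 g) < ⊤
  posSup_three : posSup (fun u => u * iteratedDeriv 3 g u) < ⊤
  posSup_four : posSup (fun u => u ^ 2 * iteratedDeriv 4 g u) < ⊤

/-- The error bound of the accelerated approximation `Mt2 t g`. -/
noncomputable def accelBound (t : ℝ) (g : ℝ → ℝ) : ℝ≥0∞ :=
  ENNReal.ofReal (1 / (8 * t ^ 2)) * posSup (iteratedDeriv 2 g)
    + ENNReal.ofReal (1 / (6 * t ^ 2)) * posSup (fun u => u * iteratedDeriv 3 g u)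
    + ENNReal.ofReal (9 / (16 * t ^ 2)) * posSup (fun u => u ^ 2 * iteratedDeriv 4 g u)

namespace IsClassD1

variable {g : ℝ → ℝ} {t : ℝ}

lemma accelBound_lt_top (hg : IsClassD1 g) : accelBound t g < ⊤ :=
  ENNReal.add_lt_top.2 ⟨ENNReal.add_lt_top.2
    ⟨ENNReal.mul_lt_top ENNReal.ofReal_lt_top hg.posSup_two,
      ENNReal.mul_lt_top ENNReal.ofReal_lt_top hg.posSup_three⟩,
    ENNReal.mul_lt_top ENNReal.ofReal_lt_top hg.posSup_four⟩

lemma iSup_Mt2_sub_le (hg : IsClassD1 g) (ht : 0 < t) :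
    (⨆ u ∈ Set.Ici (0 : ℝ), (‖Mt2 t g u - g u‖₊ : ℝ≥0∞)) ≤ accelBound t g := by
  refine iSup₂_le fun u hu => ?_
  have hbound := abs_Mt2_sub_le ht hg.continuousOn hg.contDiffOn
    (fun y => abs_le_toReal_posSup hg.posSup_two) (fun y => abs_le_toReal_posSup hg.posSup_three)
    (fun y => abs_le_toReal_posSup hg.posSup_four) hu
  rw [← enorm_eq_nnnorm, Real.enorm_eq_ofReal_abs]
  refine (ENNReal.ofReal_le_ofReal (hbound.trans_eq ?_)).trans
    (ENNReal.ofReal_toReal_le (a := accelBound t g))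
  have hfin := hg.accelBound_lt_top (t := t)
  simp only [accelBound, ENNReal.add_lt_top] at hfin
  rw [accelBound, ENNReal.toReal_add (ENNReal.add_lt_top.2 hfin.1).ne hfin.2.ne,
    ENNReal.toReal_add hfin.1.1.ne hfin.1.2.ne, ENNReal.toReal_mul, ENNReal.toReal_mul,
    ENNReal.toReal_mul, ENNReal.toReal_ofReal (by positivity),
    ENNReal.toReal_ofReal (by positivity), ENNReal.toReal_ofReal (by positivity)]
  ring

end IsClassD1

/-! ### Exponential decay and Euler derivatives -/

lemma exists_rpow_le_mul_exp {p ε : ℝ} (hp : 0 ≤ p) (hε : 0 < ε) :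
    ∃ C, ∀ u, 0 < u → u ^ p ≤ C * Real.exp (ε * u) := by
  refine ⟨((p + 1) / ε) ^ p, fun u hu => ?_⟩
  have hlin : u ≤ (p + 1) / ε * Real.exp (ε / (p + 1) * u) := by
    have hexp : ε / (p + 1) * u ≤ Real.exp (ε / (p + 1) * u) :=
      (le_add_of_nonneg_right zero_le_one).trans (Real.add_one_le_exp _)
    calc u = (p + 1) / ε * (ε / (p + 1) * u) := by field_simp
      _ ≤ (p + 1) / ε * Real.exp (ε / (p + 1) * u) := by gcongr
  calc u ^ p ≤ ((p + 1) / ε * Real.exp (ε / (p + 1) * u)) ^ p :=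
        Real.rpow_le_rpow hu.le hlin hp
    _ = ((p + 1) / ε) ^ p * Real.exp (ε * (p / (p + 1)) * u) := by
        rw [Real.mul_rpow (by positivity) (Real.exp_pos _).le, ← Real.exp_mul]
        congr 2
        ring
    _ ≤ ((p + 1) / ε) ^ p * Real.exp (ε * u) := by
        gcongr
        exact mul_le_of_le_one_right hε.le ((div_le_one (by positivity)).2 (by linarith))

/-- Continuous functions on `(0, ∞)` that are bounded by a multiple of some `exp (-ε u)`, `0 < ε`.
Values at `u ≤ 0` are unconstrained. -/
structure ExpDecay (g : ℝ → ℝ) : Prop where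
  continuousOn : ContinuousOn g (Set.Ioi 0)
  exists_abs_le_mul_exp : ∃ C ε : ℝ, 0 < ε ∧ ∀ u, 0 < u → |g u| ≤ C * Real.exp (-ε * u)

namespace ExpDecay

variable {g f : ℝ → ℝ}

lemma congr (hg : ExpDecay g) (h : ∀ u, 0 < u → f u = g u) : ExpDecay f := by
  obtain ⟨hcont, C, ε, hε, hle⟩ := hg
  exact ⟨hcont.congr h, C, ε, hε, fun u hu => (congrArg _ (h u hu)).trans_le (hle u hu)⟩

lemma zero : ExpDecay fun _ => 0 :=
  ⟨continuousOn_const, 0, 1, one_pos, fun u _ => by simp⟩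

lemma exists_common_bound (hg : ExpDecay g) (hf : ExpDecay f) :
    ∃ C ε : ℝ, 0 < ε ∧ ∀ u, 0 < u →
      |g u| ≤ C * Real.exp (-ε * u) ∧ |f u| ≤ C * Real.exp (-ε * u) := by
  obtain ⟨-, C, ε, hε, hg⟩ := hg
  obtain ⟨-, D, δ, hδ, hf⟩ := hf
  refine ⟨max |C| |D|, min ε δ, lt_min hε hδ, fun u hu => ⟨(hg u hu).trans ?_, (hf u hu).trans ?_⟩⟩
  · gcongr
    · exact (le_abs_self C).trans (le_max_left _ _)
    · exact min_le_left _ _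
  · gcongr
    · exact (le_abs_self D).trans (le_max_right _ _)
    · exact min_le_right _ _

lemma add (hg : ExpDecay g) (hf : ExpDecay f) : ExpDecay fun u => g u + f u := by
  obtain ⟨C, ε, hε, hle⟩ := hg.exists_common_bound hf
  refine ⟨hg.continuousOn.add hf.continuousOn, 2 * C, ε, hε, fun u hu => ?_⟩
  linarith [abs_add_le (g u) (f u), (hle u hu).1, (hle u hu).2]

lemma const_mul (hg : ExpDecay g) (c : ℝ) : ExpDecay fun u => c * g u := by
  obtain ⟨hcont, C, ε, hε, hle⟩ := hg
  refine ⟨continuousOn_const.mul hcont, |c| * C, ε, hε, fun u hu => ?_⟩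
  rw [abs_mul, mul_assoc]
  exact mul_le_mul_of_nonneg_left (hle u hu) (abs_nonneg c)

lemma rpow_mul (hg : ExpDecay g) {p : ℝ} (hp : 0 ≤ p) : ExpDecay fun u => u ^ p * g u := by
  obtain ⟨hcont, C, ε, hε, hle⟩ := hg
  obtain ⟨D, hD⟩ := exists_rpow_le_mul_exp hp (half_pos hε)
  refine ⟨ContinuousOn.mul ?_ hcont, D * C, ε / 2, half_pos hε, fun u hu => ?_⟩
  · exact continuousOn_id.rpow_const fun _ _ => Or.inr hp
  · have hpow : 0 ≤ u ^ p := Real.rpow_nonneg hu.le p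
    calc |u ^ p * g u| ≤ (D * Real.exp (ε / 2 * u)) * (C * Real.exp (-ε * u)) := by
          rw [abs_mul, abs_of_nonneg hpow]
          exact mul_le_mul (hD u hu) (hle u hu) (abs_nonneg _) (hpow.trans (hD u hu))
      _ = D * C * (Real.exp (ε / 2 * u) * Real.exp (-ε * u)) := by ring
      _ = D * C * Real.exp (-(ε / 2) * u) := by
          rw [← Real.exp_add]
          congr 2
          ring

lemma id_mul (hg : ExpDecay g) : ExpDecay fun u => u * g u :=
  (hg.rpow_mul zero_le_one).congr fun u _ => by rw [Real.rpow_one]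

lemma exists_abs_le (hg : ExpDecay g) : ∃ C, ∀ u, 0 < u → |g u| ≤ C := by
  obtain ⟨-, C, ε, hε, hle⟩ := hg
  refine ⟨|C|, fun u hu => (hle u hu).trans ?_⟩
  refine (mul_le_mul_of_nonneg_right (le_abs_self C) (Real.exp_pos _).le).trans ?_
  exact mul_le_of_le_one_right (abs_nonneg C) (Real.exp_le_one_iff.2 (by nlinarith))

lemma integrableOn (hg : ExpDecay g) : IntegrableOn g (Set.Ioi 0) := by
  obtain ⟨hcont, C, ε, hε, hle⟩ := hg
  exact Integrable.mono' ((integrableOn_exp_mul_Ioi (neg_lt_zero.2 hε) 0).const_mul C)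
    (hcont.aestronglyMeasurable measurableSet_Ioi)
    ((ae_restrict_mem measurableSet_Ioi).mono hle)

lemma intervalIntegrable (hg : ExpDecay g) {u : ℝ} (hu : 0 ≤ u) :
    IntervalIntegrable g volume 0 u :=
  (intervalIntegrable_iff_integrableOn_Ioc_of_le hu).2
    (hg.integrableOn.mono_set Set.Ioc_subset_Ioi_self)

end ExpDecay

/-- `EulerExpDecay n g` says that `θ^j g` decays exponentially for all `j ≤ n`, where `θ = u d/du`
is the Euler operator on `(0, ∞)`. Compared with `d/du`, the operator `θ` tolerates power
singularities at the origin, such as those of the derivatives of a gamma density. -/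
def EulerExpDecay : ℕ → (ℝ → ℝ) → Prop
  | 0, g => ExpDecay g
  | n + 1, g => ExpDecay g ∧ ∃ h, EulerExpDecay n h ∧ ∀ u, 0 < u → HasDerivAt g (h u / u) u

namespace EulerExpDecay

variable {n : ℕ} {g f : ℝ → ℝ}

lemma expDecay (hg : EulerExpDecay n g) : ExpDecay g := by
  cases n with
  | zero => exact hg
  | succ n => exact hg.1

lemma of_succ (hg : EulerExpDecay (n + 1) g) : EulerExpDecay n g := by
  induction n generalizing g with
  | zero => exact hg.1
  | succ n ih =>
    obtain ⟨hdecay, θg, hθg, hderiv⟩ := hg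
    exact ⟨hdecay, θg, ih hθg, hderiv⟩

lemma congr (hg : EulerExpDecay n g) (h : ∀ u, 0 < u → f u = g u) : EulerExpDecay n f := by
  cases n with
  | zero => exact ExpDecay.congr hg h
  | succ n =>
    obtain ⟨hdecay, θg, hθg, hderiv⟩ := hg
    refine ⟨hdecay.congr h, θg, hθg, fun u hu => (hderiv u hu).congr_of_eventuallyEq ?_⟩
    filter_upwards [lt_mem_nhds hu] with y hy using h y hy

lemma zero : EulerExpDecay n fun _ => 0 := by
  induction n with
  | zero => exact ExpDecay.zero
  | succ n ih => exact ⟨ExpDecay.zero, _, ih, fun u _ => by simpa using hasDerivAt_const u (0 : ℝ)⟩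

lemma add (hg : EulerExpDecay n g) (hf : EulerExpDecay n f) :
    EulerExpDecay n fun u => g u + f u := by
  induction n generalizing g f with
  | zero => exact ExpDecay.add hg hf
  | succ n ih =>
    obtain ⟨hg, θg, hθg, hderivg⟩ := hg
    obtain ⟨hf, θf, hθf, hderivf⟩ := hf
    exact ⟨hg.add hf, _, ih hθg hθf, fun u hu =>
      ((hderivg u hu).add (hderivf u hu)).congr_deriv (add_div _ _ _).symm⟩

lemma const_mul (hg : EulerExpDecay n g) (c : ℝ) : EulerExpDecay n fun u => c * g u := by
  induction n generalizing g with
  | zero => exact ExpDecay.const_mul hg c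
  | succ n ih =>
    obtain ⟨hg, θg, hθg, hderiv⟩ := hg
    exact ⟨hg.const_mul c, _, ih hθg, fun u hu =>
      ((hderiv u hu).const_mul c).congr_deriv (mul_div_assoc _ _ _).symm⟩

lemma id_mul (hg : EulerExpDecay n g) : EulerExpDecay n fun u => u * g u := by
  induction n generalizing g with
  | zero => exact ExpDecay.id_mul hg
  | succ n ih =>
    have hlower := hg.of_succ
    obtain ⟨hg, θg, hθg, hderiv⟩ := hg
    refine ⟨hg.id_mul, _, (ih hlower).add (ih hθg), fun u hu => ?_⟩
    refine ((hasDerivAt_id u).mul (hderiv u hu)).congr_deriv ?_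
    simp only [id_eq]
    field_simp

lemma sum {ι : Type*} {G : ι → ℝ → ℝ} (s : Finset ι) (hG : ∀ i ∈ s, EulerExpDecay n (G i)) :
    EulerExpDecay n fun u => ∑ i ∈ s, G i u := by
  induction s using Finset.cons_induction with
  | empty => simpa using zero
  | cons i s hi ih =>
    simp only [Finset.sum_cons]
    exact (hG i (Finset.mem_cons_self i s)).add
      (ih fun j hj => hG j (Finset.mem_cons_of_mem hj))

lemma contDiffOn (hg : EulerExpDecay n g) : ContDiffOn ℝ n g (Set.Ioi 0) := by
  induction n generalizing g with
  | zero => exact contDiffOn_zero.2 hg.expDecay.continuousOn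
  | succ n ih =>
    obtain ⟨-, θg, hθg, hderiv⟩ := hg
    push_cast
    refine (contDiffOn_succ_iff_deriv_of_isOpen isOpen_Ioi).2
      ⟨fun u hu => (hderiv u hu).differentiableAt.differentiableWithinAt, by simp, ?_⟩
    exact ((ih hθg).div contDiffOn_id fun u hu => ne_of_gt hu).congr fun u hu => (hderiv u hu).deriv

lemma pow_mul_iteratedDeriv {m k : ℕ} (hg : EulerExpDecay (m + k) g) :
    EulerExpDecay m fun u => u ^ k * iteratedDeriv k g u := by
  induction k generalizing m with
  | zero => simpa using hg
  | succ k ih =>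
    have hk : EulerExpDecay (m + 1) fun u => u ^ k * iteratedDeriv k g u :=
      ih (by rwa [add_right_comm, add_assoc])
    have hlower := hk.of_succ
    obtain ⟨-, θw, hθw, hderiv⟩ := hk
    refine (hθw.add (hlower.const_mul (-k))).congr fun u hu => ?_
    have hquot : iteratedDeriv k g =ᶠ[𝓝 u] fun v => (v ^ k * iteratedDeriv k g v) / v ^ k := by
      filter_upwards [lt_mem_nhds hu] with v hv
      field_simp
    have hderiv_quot := (hderiv u hu).fun_div (hasDerivAt_pow k u) (by positivity)
    rw [iteratedDeriv_succ, hquot.deriv_eq, hderiv_quot.deriv]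
    rcases k with _ | k
    · simp
      field_simp
    · simp only [Nat.add_sub_cancel]
      field_simp
      ring

end EulerExpDecay

/-! ### Convolution on the half-line -/

/-- The convolution of the restrictions of `g` and `f` to the half-line, `∫₀ᵘ g(u - y) f(y) dy`. -/
noncomputable def causalConv (g f : ℝ → ℝ) (u : ℝ) : ℝ := ∫ y in (0 : ℝ)..u, g (u - y) * f y

lemma causalConv_comm (g f : ℝ → ℝ) : causalConv g f = causalConv f g := by
  funext u
  have hsub := intervalIntegral.integral_comp_sub_left (a := 0) (b := u)
    (f := fun y => f (u - y) * g y) u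
  simp only [sub_self, sub_zero, sub_sub_cancel] at hsub
  simp only [causalConv, mul_comm (g _), hsub]

/-- `u⁻¹ (g ⋆ f)(u)`, as an integral over the unit interval, whose domain does not move with `u`. -/
noncomputable def meanConv (g f : ℝ → ℝ) (u : ℝ) : ℝ :=
  ∫ s in Set.Ioo (0 : ℝ) 1, g (u * (1 - s)) * f (u * s)

lemma causalConv_eq_mul_meanConv (g f : ℝ → ℝ) :
    causalConv g f = fun u => u * meanConv g f u := by
  funext u
  have hscale := intervalIntegral.mul_integral_comp_mul_left (a := 0) (b := 1)
    (f := fun y => g (u - y) * f y) u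
  simp only [mul_zero, mul_one] at hscale
  rw [causalConv, ← hscale, meanConv, ← integral_Ioc_eq_integral_Ioo,
    ← intervalIntegral.integral_of_le zero_le_one]
  simp only [mul_sub, mul_one]

section MeanConv

variable {g f : ℝ → ℝ} {C D u : ℝ}

lemma mul_one_sub_pos_and_mul_pos {s : ℝ} (hu : 0 < u) (hs : s ∈ Set.Ioo (0 : ℝ) 1) :
    0 < u * (1 - s) ∧ 0 < u * s :=
  ⟨mul_pos hu (sub_pos.2 hs.2), mul_pos hu hs.1⟩

lemma aestronglyMeasurable_meanConv_integrand (hg : ContinuousOn g (Set.Ioi 0))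
    (hf : ContinuousOn f (Set.Ioi 0)) (hu : 0 < u) :
    AEStronglyMeasurable (fun s => g (u * (1 - s)) * f (u * s))
      (volume.restrict (Set.Ioo 0 1)) := by
  refine ContinuousOn.aestronglyMeasurable (.mul ?_ ?_) measurableSet_Ioo
  · exact hg.comp (by fun_prop) fun s hs => (mul_one_sub_pos_and_mul_pos hu hs).1
  · exact hf.comp (by fun_prop) fun s hs => (mul_one_sub_pos_and_mul_pos hu hs).2

lemma abs_meanConv_integrand_le {s : ℝ} (hgC : ∀ v, 0 < v → |g v| ≤ C)
    (hfD : ∀ v, 0 < v → |f v| ≤ D) (hu : 0 < u) (hs : s ∈ Set.Ioo (0 : ℝ) 1) :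
    |g (u * (1 - s)) * f (u * s)| ≤ C * D := by
  obtain ⟨hleft, hright⟩ := mul_one_sub_pos_and_mul_pos hu hs
  rw [abs_mul]
  exact mul_le_mul (hgC _ hleft) (hfD _ hright) (abs_nonneg _) ((abs_nonneg _).trans (hgC _ hleft))

lemma integrableOn_meanConv_integrand (hg : ContinuousOn g (Set.Ioi 0))
    (hf : ContinuousOn f (Set.Ioi 0)) (hgC : ∀ v, 0 < v → |g v| ≤ C)
    (hfD : ∀ v, 0 < v → |f v| ≤ D) (hu : 0 < u) :
    IntegrableOn (fun s => g (u * (1 - s)) * f (u * s)) (Set.Ioo 0 1) :=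
  Integrable.mono' (integrable_const (C * D)) (aestronglyMeasurable_meanConv_integrand hg hf hu)
    ((ae_restrict_mem measurableSet_Ioo).mono fun _ hs => abs_meanConv_integrand_le hgC hfD hu hs)

lemma continuousAt_meanConv (hg : ContinuousOn g (Set.Ioi 0)) (hf : ContinuousOn f (Set.Ioi 0))
    (hgC : ∀ v, 0 < v → |g v| ≤ C) (hfD : ∀ v, 0 < v → |f v| ≤ D) (hu : 0 < u) :
    ContinuousAt (meanConv g f) u := by
  refine continuousAt_of_dominated (bound := fun _ => C * D) ?_ ?_ (integrable_const _) ?_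
  · filter_upwards [lt_mem_nhds hu] with v hv
    exact aestronglyMeasurable_meanConv_integrand hg hf hv
  · filter_upwards [lt_mem_nhds hu] with v hv
    exact (ae_restrict_mem measurableSet_Ioo).mono fun s hs =>
      abs_meanConv_integrand_le hgC hfD hv hs
  · refine (ae_restrict_mem measurableSet_Ioo).mono fun s hs => ?_
    obtain ⟨hleft, hright⟩ := mul_one_sub_pos_and_mul_pos hu hs
    have hg_at : ContinuousAt g (u * (1 - s)) := hg.continuousAt (Ioi_mem_nhds hleft)
    have hf_at : ContinuousAt f (u * s) := hf.continuousAt (Ioi_mem_nhds hright)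
    exact (ContinuousAt.comp (f := fun v => v * (1 - s)) hg_at (by fun_prop)).mul
      (ContinuousAt.comp (f := fun v => v * s) hf_at (by fun_prop))

lemma hasDerivAt_meanConv_integrand {θg θf : ℝ → ℝ} {s : ℝ}
    (hg : ∀ v, 0 < v → HasDerivAt g (θg v / v) v) (hf : ∀ v, 0 < v → HasDerivAt f (θf v / v) v)
    (hu : 0 < u) (hs : s ∈ Set.Ioo (0 : ℝ) 1) :
    HasDerivAt (fun v => g (v * (1 - s)) * f (v * s))
      ((θg (u * (1 - s)) * f (u * s) + g (u * (1 - s)) * θf (u * s)) / u) u := by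
  obtain ⟨hleft, hright⟩ := mul_one_sub_pos_and_mul_pos hu hs
  have hg_scaled := (hg _ hleft).comp u ((hasDerivAt_id u).mul_const (1 - s))
  have hf_scaled := (hf _ hright).comp u ((hasDerivAt_id u).mul_const s)
  refine (hg_scaled.mul hf_scaled).congr_deriv ?_
  have hs0 : s ≠ 0 := hs.1.ne'
  have hs1 : 1 - s ≠ 0 := (sub_pos.2 hs.2).ne'
  simp only [Function.comp, id_eq]
  field_simp

end MeanConv

lemma ExpDecay.causalConv {g f : ℝ → ℝ} (hg : ExpDecay g) (hf : ExpDecay f) :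
    ExpDecay (causalConv g f) := by
  obtain ⟨C, ε, hε, hle⟩ := hg.exists_common_bound hf
  obtain ⟨Cg, hCg⟩ := hg.exists_abs_le
  obtain ⟨Cf, hCf⟩ := hf.exists_abs_le
  have hmean : ExpDecay (meanConv g f) := by
    refine ⟨fun u hu => (continuousAt_meanConv hg.continuousOn
      hf.continuousOn hCg hCf hu).continuousWithinAt, C * C, ε, hε, fun u hu => ?_⟩
    have hnorm := norm_setIntegral_le_of_norm_le_const (μ := volume) (s := Set.Ioo (0 : ℝ) 1)
      (f := fun s => g (u * (1 - s)) * f (u * s)) (C := C * C * Real.exp (-ε * u)) (by simp)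
      fun s hs => ?_
    · simpa [meanConv] using hnorm
    · obtain ⟨hleft, hright⟩ := mul_one_sub_pos_and_mul_pos hu hs
      calc ‖g (u * (1 - s)) * f (u * s)‖
          ≤ C * Real.exp (-ε * (u * (1 - s))) * (C * Real.exp (-ε * (u * s))) := by
            rw [norm_mul]
            exact mul_le_mul (hle _ hleft).1 (hle _ hright).2 (norm_nonneg _)
              ((abs_nonneg _).trans (hle _ hleft).1)
        _ = C * C * (Real.exp (-ε * (u * (1 - s))) * Real.exp (-ε * (u * s))) := by ring
        _ = C * C * Real.exp (-ε * u) := by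
            rw [← Real.exp_add]
            congr 2
            ring
  rw [causalConv_eq_mul_meanConv]
  exact hmean.id_mul

lemma hasDerivAt_meanConv {g f θg θf : ℝ → ℝ} {u : ℝ} (hg : ExpDecay g) (hf : ExpDecay f)
    (hθg : ExpDecay θg) (hθf : ExpDecay θf) (hg' : ∀ v, 0 < v → HasDerivAt g (θg v / v) v)
    (hf' : ∀ v, 0 < v → HasDerivAt f (θf v / v) v) (hu : 0 < u) :
    HasDerivAt (meanConv g f) ((meanConv θg f u + meanConv g θf u) / u) u := by
  obtain ⟨C, hC⟩ := hg.exists_abs_le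
  obtain ⟨D, hD⟩ := hf.exists_abs_le
  obtain ⟨C', hC'⟩ := hθg.exists_abs_le
  obtain ⟨D', hD'⟩ := hθf.exists_abs_le
  have hint_left := integrableOn_meanConv_integrand hθg.continuousOn hf.continuousOn hC' hD hu
  have hint_right := integrableOn_meanConv_integrand hg.continuousOn hθf.continuousOn hC hD' hu
  have hderiv := (hasDerivAt_integral_of_dominated_loc_of_deriv_le
    (μ := volume.restrict (Set.Ioo (0 : ℝ) 1))
    (F := fun v s => g (v * (1 - s)) * f (v * s))
    (F' := fun v s => (θg (v * (1 - s)) * f (v * s) + g (v * (1 - s)) * θf (v * s)) / v)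
    (bound := fun _ => (C' * D + C * D') / (u / 2)) (s := Set.Ioi (u / 2))
    (Ioi_mem_nhds (half_lt_self hu)) ?_
    (integrableOn_meanConv_integrand hg.continuousOn hf.continuousOn hC hD hu) ?_ ?_
    (integrable_const _) ?_).2
  · rwa [integral_div, integral_add hint_left hint_right] at hderiv
  · filter_upwards [lt_mem_nhds hu] with v hv
    exact aestronglyMeasurable_meanConv_integrand hg.continuousOn hf.continuousOn hv
  · exact ((hint_left.add hint_right).div_const u).aestronglyMeasurable
  · refine (ae_restrict_mem measurableSet_Ioo).mono fun s hs v hv => ?_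
    have hv0 : 0 < v := (half_pos hu).trans hv
    have hnum : |θg (v * (1 - s)) * f (v * s) + g (v * (1 - s)) * θf (v * s)| ≤ C' * D + C * D' :=
      (abs_add_le _ _).trans (add_le_add (abs_meanConv_integrand_le hC' hD hv0 hs)
        (abs_meanConv_integrand_le hC hD' hv0 hs))
    rw [Real.norm_eq_abs, abs_div, abs_of_pos hv0]
    exact div_le_div₀ ((abs_nonneg _).trans hnum) hnum (half_pos hu) (le_of_lt hv)
  · exact (ae_restrict_mem measurableSet_Ioo).mono fun s hs v hv =>
      hasDerivAt_meanConv_integrand hg' hf' ((half_pos hu).trans hv) hs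

lemma EulerExpDecay.causalConv {n : ℕ} {g f : ℝ → ℝ} (hg : EulerExpDecay n g)
    (hf : EulerExpDecay n f) : EulerExpDecay n (causalConv g f) := by
  induction n generalizing g f with
  | zero => exact ExpDecay.causalConv hg hf
  | succ n ih =>
    have hg_lower := hg.of_succ
    have hf_lower := hf.of_succ
    obtain ⟨hg, θg, hθg, hg'⟩ := hg
    obtain ⟨hf, θf, hθf, hf'⟩ := hf
    refine ⟨hg.causalConv hf, _,
      (ih hg_lower hf_lower).add ((ih hθg hf_lower).add (ih hg_lower hθf)), fun u hu => ?_⟩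
    have hmean := hasDerivAt_meanConv hg hf hθg.expDecay hθf.expDecay hg' hf' hu
    simp only [causalConv_eq_mul_meanConv]
    refine ((hasDerivAt_id u).mul hmean).congr_deriv ?_
    simp only [id_eq]
    field_simp

/-! ### The Leibniz rule for convolutions -/

section PrimitiveConv

variable {g f : ℝ → ℝ} {u : ℝ}

lemma indicator_mul_indicator_sub_eq {v : ℝ} (hv : v ∈ Set.Ioc 0 u) (y : ℝ) :
    (Set.Ioc 0 u).indicator f y * (Set.Ioc 0 u).indicator g (v - y)
      = (Set.Ioo 0 v).indicator (fun y => g (v - y) * f y) y := by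
  by_cases hy : y ∈ Set.Ioo 0 v
  · have hy_mem : y ∈ Set.Ioc 0 u := ⟨hy.1, hy.2.le.trans hv.2⟩
    have hsub_mem : v - y ∈ Set.Ioc 0 u := ⟨sub_pos.2 hy.2, by linarith [hy.1, hv.2]⟩
    rw [Set.indicator_of_mem hy, Set.indicator_of_mem hy_mem, Set.indicator_of_mem hsub_mem,
      mul_comm]
  · rw [Set.indicator_of_notMem hy, mul_eq_zero]
    by_contra! hne
    exact hy ⟨(Set.mem_of_indicator_ne_zero hne.1).1,
      sub_pos.1 (Set.mem_of_indicator_ne_zero hne.2).1⟩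

lemma integral_indicator_mul_indicator_sub {v : ℝ} (hv : v ∈ Set.Ioc 0 u) :
    ∫ y, (Set.Ioc 0 u).indicator f y * (Set.Ioc 0 u).indicator g (v - y) = causalConv g f v := by
  simp only [indicator_mul_indicator_sub_eq hv]
  rw [integral_indicator measurableSet_Ioo, ← integral_Ioc_eq_integral_Ioo,
    ← intervalIntegral.integral_of_le hv.1.le, causalConv]

lemma setIntegral_indicator_comp_sub {y : ℝ} (hy : y ∈ Set.Ioc 0 u) :
    ∫ v in Set.Ioc 0 u, (Set.Ioc 0 u).indicator g (v - y) = ∫ w in (0 : ℝ)..(u - y), g w := by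
  have hshift : ∀ v, (Set.Ioc 0 u).indicator (fun v => (Set.Ioc 0 u).indicator g (v - y)) v
      = (Set.Ioc 0 (u - y)).indicator g (v - y) := fun v => by
    by_cases hvy : v - y ∈ Set.Ioc 0 (u - y)
    · rw [Set.indicator_of_mem hvy, Set.indicator_of_mem, Set.indicator_of_mem]
      · exact ⟨hvy.1, hvy.2.trans (by linarith [hy.1])⟩
      · exact ⟨by linarith [hvy.1, hy.1], by linarith [hvy.2]⟩
    · rw [Set.indicator_of_notMem hvy]
      by_contra hne
      obtain ⟨hv, hne⟩ := Set.indicator_apply_ne_zero.1 hne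
      exact hvy ⟨(Set.mem_of_indicator_ne_zero hne).1, sub_le_sub_right hv.2 y⟩
  rw [← integral_indicator measurableSet_Ioc]
  simp only [hshift]
  rw [integral_sub_right_eq_self, integral_indicator measurableSet_Ioc,
    intervalIntegral.integral_of_le (sub_nonneg.2 hy.2)]

lemma integrable_indicator_mul_indicator_sub (hg : IntegrableOn g (Set.Ioc 0 u))
    (hf : IntegrableOn f (Set.Ioc 0 u)) :
    Integrable (Function.uncurry fun v y =>
        (Set.Ioc 0 u).indicator f y * (Set.Ioc 0 u).indicator g (v - y))
      ((volume.restrict (Set.Ioc 0 u)).prod volume) := by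
  have hint := ((integrable_indicator_iff measurableSet_Ioc).2 hf).convolution_integrand
    (ContinuousLinearMap.mul ℝ ℝ) ((integrable_indicator_iff measurableSet_Ioc).2 hg)
  have hrestrict := hint.restrict (s := Set.Ioc 0 u ×ˢ Set.univ)
  rwa [← Measure.prod_restrict, Measure.restrict_univ] at hrestrict

lemma integrableOn_causalConv (hg : IntegrableOn g (Set.Ioc 0 u))
    (hf : IntegrableOn f (Set.Ioc 0 u)) : IntegrableOn (causalConv g f) (Set.Ioc 0 u) :=
  (integrable_indicator_mul_indicator_sub hg hf).integral_prod_left.congr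
    ((ae_restrict_mem measurableSet_Ioc).mono fun _ hv => integral_indicator_mul_indicator_sub hv)

lemma setIntegral_causalConv (hg : IntegrableOn g (Set.Ioc 0 u))
    (hf : IntegrableOn f (Set.Ioc 0 u)) :
    ∫ v in Set.Ioc 0 u, causalConv g f v
      = ∫ y in Set.Ioc 0 u, (∫ w in (0 : ℝ)..(u - y), g w) * f y := by
  have hswap := integral_integral_swap (integrable_indicator_mul_indicator_sub hg hf)
  rw [setIntegral_congr_fun measurableSet_Ioc fun v hv =>
    integral_indicator_mul_indicator_sub (g := g) (f := f) hv] at hswap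
  rw [hswap, ← integral_indicator measurableSet_Ioc]
  refine integral_congr_ae (Eventually.of_forall fun y => ?_)
  by_cases hy : y ∈ Set.Ioc 0 u
  · simp only [Set.indicator_of_mem hy, integral_const_mul, setIntegral_indicator_comp_sub hy,
      mul_comm]
  · simp only [Set.indicator_of_notMem hy, zero_mul, integral_zero]

end PrimitiveConv

section Leibniz

variable {g g' f : ℝ → ℝ} {u : ℝ}

/- Writing `g(u - y) = g 0 + ∫₀^{u-y} g'` avoids differentiating under the integral sign, so `f`
need not be continuous. -/
lemma causalConv_eq_integral (hu : 0 ≤ u) (hg : ContinuousOn g (Set.Icc 0 u))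
    (hderiv : ∀ v ∈ Set.Ioo 0 u, HasDerivAt g (g' v) v) (hg' : IntervalIntegrable g' volume 0 u)
    (hf : IntervalIntegrable f volume 0 u) :
    causalConv g f u = ∫ v in (0 : ℝ)..u, (g 0 * f v + causalConv g' f v) := by
  have hg'_Ioc := (intervalIntegrable_iff_integrableOn_Ioc_of_le hu).1 hg'
  have hf_Ioc := (intervalIntegrable_iff_integrableOn_Ioc_of_le hu).1 hf
  have hconv := integrableOn_causalConv hg'_Ioc hf_Ioc
  have hftc : ∀ y ∈ Set.Ioc 0 u, g (u - y) = g 0 + ∫ w in (0 : ℝ)..(u - y), g' w := fun y hy => by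
    have hsub : u - y ∈ Set.Icc 0 u := ⟨sub_nonneg.2 hy.2, by linarith [hy.1]⟩
    have hint := intervalIntegral.integral_eq_sub_of_hasDerivAt_of_le hsub.1
      (hg.mono (Set.Icc_subset_Icc_right hsub.2))
      (fun v hv => hderiv v (Set.Ioo_subset_Ioo_right hsub.2 hv))
      (hg'.mono_set (Set.uIcc_subset_uIcc_left (Set.uIcc_of_le hu ▸ hsub)))
    rw [hint]
    ring
  have hprod : IntegrableOn (fun y => g (u - y) * f y) (Set.Ioc 0 u) := by
    refine (hf.continuousOn_mul (hg.comp (by fun_prop) ?_)).1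
    intro y hy
    rw [Set.uIcc_of_le hu] at hy
    exact ⟨sub_nonneg.2 hy.2, by linarith [hy.1]⟩
  have hdiff : ∫ v in Set.Ioc 0 u, causalConv g' f v
      = ∫ y in Set.Ioc 0 u, (g (u - y) * f y - g 0 * f y) := by
    rw [setIntegral_causalConv hg'_Ioc hf_Ioc]
    refine setIntegral_congr_fun measurableSet_Ioc fun y hy => ?_
    simp only [hftc y hy]
    ring
  rw [causalConv, intervalIntegral.integral_of_le hu, intervalIntegral.integral_of_le hu,
    integral_add (hf_Ioc.const_mul _) hconv, hdiff, integral_sub hprod (hf_Ioc.const_mul _)]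
  ring

lemma continuousOn_primitive_Ici (hf : ∀ u, 0 < u → IntervalIntegrable f volume 0 u) :
    ContinuousOn (fun u => ∫ y in (0 : ℝ)..u, f y) (Set.Ici 0) := fun u hu => by
  have hu0 : 0 ≤ u := hu
  have hu1 : 0 < u + 1 := by positivity
  have hcont := intervalIntegral.continuousOn_primitive_interval' (hf (u + 1) hu1)
    Set.left_mem_uIcc
  rw [Set.uIcc_of_le hu1.le] at hcont
  refine (hcont u ⟨hu0, (lt_add_one u).le⟩).mono_of_mem_nhdsWithin ?_
  rw [← Set.Ici_inter_Iic]
  exact inter_mem_nhdsWithin _ (Iic_mem_nhds (lt_add_one u))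

lemma continuousOn_causalConv (hg : ContinuousOn g (Set.Ici 0))
    (hderiv : ∀ v, 0 < v → HasDerivAt g (g' v) v)
    (hg' : ∀ u, 0 < u → IntervalIntegrable g' volume 0 u)
    (hf : ∀ u, 0 < u → IntervalIntegrable f volume 0 u) :
    ContinuousOn (causalConv g f) (Set.Ici 0) := by
  refine (continuousOn_primitive_Ici (f := fun v => g 0 * f v + causalConv g' f v)
    fun u hu => ?_).congr fun u hu => ?_
  · rw [intervalIntegrable_iff_integrableOn_Ioc_of_le hu.le]
    exact ((hf u hu).1.const_mul _).add (integrableOn_causalConv (hg' u hu).1 (hf u hu).1)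
  · rcases (Set.mem_Ici.1 hu).eq_or_lt with rfl | hu
    · simp [causalConv]
    · exact causalConv_eq_integral hu.le (hg.mono Set.Icc_subset_Ici_self)
        (fun v hv => hderiv v hv.1) (hg' u hu) (hf u hu)

lemma hasDerivAt_causalConv (hg : ContinuousOn g (Set.Ici 0))
    (hderiv : ∀ v, 0 < v → HasDerivAt g (g' v) v) (hg' : ExpDecay g') (hf : ExpDecay f)
    (hu : 0 < u) :
    HasDerivAt (causalConv g f) (g 0 * f u + causalConv g' f u) u := by
  have hintegrand : ExpDecay fun v => g 0 * f v + causalConv g' f v :=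
    (hf.const_mul _).add (hg'.causalConv hf)
  have hprimitive := intervalIntegral.integral_hasDerivAt_right
    (hintegrand.intervalIntegrable hu.le)
    ⟨Set.Ioi 0, Ioi_mem_nhds hu, hintegrand.integrableOn.aestronglyMeasurable⟩
    (hintegrand.continuousOn.continuousAt (Ioi_mem_nhds hu))
  refine hprimitive.congr_of_eventuallyEq ?_
  filter_upwards [lt_mem_nhds hu] with v hv
  exact causalConv_eq_integral hv.le (hg.mono Set.Icc_subset_Ici_self) (fun w hw => hderiv w hw.1)
    (hg'.intervalIntegrable hv.le) (hf.intervalIntegrable hv.le)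

end Leibniz

/-! ### Renewal equations -/

/-- `ψ` is a locally bounded solution of the renewal equation `ψ = h + k ⋆ ψ` on `[0, ∞)`. Neither
measurability nor integrability of `ψ` is assumed, so the convolution integral may a priori take
the junk value `0`. -/
structure IsRenewalSolution (k h ψ : ℝ → ℝ) : Prop where
  locallyBounded : ∀ x, 0 < x → ∃ M, ∀ u ∈ Set.Icc 0 x, |ψ u| ≤ M
  eq_add_causalConv : ∀ u, 0 ≤ u → ψ u = h u + causalConv k ψ u

lemma exists_forall_Ico_ne_zero {k : ℝ → ℝ} (hk : ContinuousOn k (Set.Ici 0)) (hk0 : k 0 ≠ 0) :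
    ∃ δ > 0, ∀ v ∈ Set.Ico 0 δ, k v ≠ 0 := by
  have hne : ∀ᶠ v in 𝓝[≥] 0, k v ≠ 0 :=
    (hk 0 Set.self_mem_Ici).eventually_ne hk0
  obtain ⟨δ, hδ, hsub⟩ := mem_nhdsGE_iff_exists_Ico_subset.1 hne
  exact ⟨δ, hδ, hsub⟩

lemma aestronglyMeasurable_restrict_Ioc_of_forall_lt {ψ : ℝ → ℝ} {a c : ℝ}
    (h : ∀ z < c, AEStronglyMeasurable ψ (volume.restrict (Set.Ioc a z))) :
    AEStronglyMeasurable ψ (volume.restrict (Set.Ioc a c)) := by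
  obtain ⟨z, -, hz_lt, hz_lim⟩ := exists_seq_strictMono_tendsto c
  have hunion : ⋃ n, Set.Ioc a (z n) = Set.Ioo a c := by
    simp only [← Set.Ioi_inter_Iic, ← Set.Ioi_inter_Iio, ← Set.inter_iUnion,
      iUnion_Iic_eq_Iio_of_lt_of_tendsto hz_lt hz_lim]
  rw [← Measure.restrict_congr_set Ioo_ae_eq_Ioc, ← hunion, aestronglyMeasurable_iUnion_iff]
  exact fun n => h _ (hz_lt n)

namespace IsRenewalSolution

variable {k h ψ k₁ : ℝ → ℝ}

/- If the convolution integrand is integrable, division by `k (u - y) ≠ 0` shows that `ψ` is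
measurable on `(c, u]`; otherwise the integral has the junk value `0`. -/
lemma aestronglyMeasurable_or_eq (hψ : IsRenewalSolution k h ψ) (hk : ContinuousOn k (Set.Ici 0))
    {δ c u : ℝ} (hδ : ∀ v ∈ Set.Ico 0 δ, k v ≠ 0) (hc : 0 ≤ c)
    (hψc : AEStronglyMeasurable ψ (volume.restrict (Set.Ioc 0 c))) (hu : u ∈ Set.Ioo c (c + δ)) :
    AEStronglyMeasurable ψ (volume.restrict (Set.Ioc 0 u)) ∨ ψ u = h u := by
  have hu0 : 0 ≤ u := hc.trans hu.1.le
  by_cases hint : IntervalIntegrable (fun y => k (u - y) * ψ y) volume 0 u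
  · left
    rw [← Set.Ioc_union_Ioc_eq_Ioc hc hu.1.le, aestronglyMeasurable_union_iff]
    have hk_ne : ∀ y ∈ Set.Ioc c u, k (u - y) ≠ 0 := fun y hy =>
      hδ _ ⟨sub_nonneg.2 hy.2, by linarith [hy.1, hu.2]⟩
    have hk_inv : ContinuousOn (fun y => (k (u - y))⁻¹) (Set.Ioc c u) :=
      (hk.comp (by fun_prop) fun y hy => sub_nonneg.2 hy.2).inv₀ hk_ne
    have hprod : AEStronglyMeasurable (fun y => k (u - y) * ψ y)
        (volume.restrict (Set.Ioc c u)) :=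
      hint.1.aestronglyMeasurable.mono_measure
        (Measure.restrict_mono (Set.Ioc_subset_Ioc_left hc) le_rfl)
    refine ⟨hψc, ((hk_inv.aestronglyMeasurable measurableSet_Ioc).mul hprod).congr ?_⟩
    filter_upwards [ae_restrict_mem measurableSet_Ioc] with y hy
    exact inv_mul_cancel_left₀ (hk_ne y hy) (ψ y)
  · right
    rw [hψ.eq_add_causalConv u hu0, causalConv, intervalIntegral.integral_undef hint, add_zero]

lemma aestronglyMeasurable (hψ : IsRenewalSolution k h ψ) (hk : ContinuousOn k (Set.Ici 0))
    (hk0 : k 0 ≠ 0) (hh : ContinuousOn h (Set.Ici 0)) (x : ℝ) :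
    AEStronglyMeasurable ψ (volume.restrict (Set.Ioc 0 x)) := by
  obtain ⟨δ, hδ, hk_ne⟩ := exists_forall_Ico_ne_zero hk hk0
  rcases lt_or_ge x 0 with hx | hx
  · simp [Set.Ioc_eq_empty_of_le hx.le]
  let S := {z | z ∈ Set.Icc 0 x ∧ AEStronglyMeasurable ψ (volume.restrict (Set.Ioc 0 z))}
  have hS_zero : 0 ∈ S := ⟨⟨le_rfl, hx⟩, by simp⟩
  have hS_bdd : BddAbove S := ⟨x, fun z hz => hz.1.2⟩
  let c := sSup S
  have hc0 : 0 ≤ c := le_csSup hS_bdd hS_zero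
  have hcx : c ≤ x := csSup_le ⟨0, hS_zero⟩ fun z hz => hz.1.2
  have hψc : AEStronglyMeasurable ψ (volume.restrict (Set.Ioc 0 c)) := by
    refine aestronglyMeasurable_restrict_Ioc_of_forall_lt fun z hz => ?_
    obtain ⟨y, hy, hzy⟩ := exists_lt_of_lt_csSup ⟨0, hS_zero⟩ hz
    exact hy.2.mono_measure (Measure.restrict_mono (Set.Ioc_subset_Ioc_right hzy.le) le_rfl)
  rcases hcx.eq_or_lt with hcx | hcx
  · exact hcx ▸ hψc
  let d := min x (c + δ / 2)
  have hcd : c < d := lt_min hcx (by linarith)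
  have hψd : AEStronglyMeasurable ψ (volume.restrict (Set.Ioc 0 d)) := by
    rw [← Set.Ioc_union_Ioc_eq_Ioc hc0 hcd.le, aestronglyMeasurable_union_iff]
    have hh_meas : AEStronglyMeasurable h (volume.restrict (Set.Ioc c d)) :=
      (hh.mono fun u hu => hc0.trans hu.1.le).aestronglyMeasurable measurableSet_Ioc
    refine ⟨hψc, hh_meas.congr ?_⟩
    filter_upwards [ae_restrict_mem measurableSet_Ioc] with u hu
    have hud : u ≤ c + δ / 2 := hu.2.trans (min_le_right _ _)
    refine ((hψ.aestronglyMeasurable_or_eq hk hk_ne hc0 hψc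
      ⟨hu.1, by linarith⟩).resolve_left fun hmeas => hu.1.not_ge ?_).symm
    exact le_csSup hS_bdd ⟨⟨hc0.trans hu.1.le, hu.2.trans (min_le_left _ _)⟩, hmeas⟩
  exact absurd (le_csSup hS_bdd ⟨⟨hc0.trans hcd.le, min_le_left _ _⟩, hψd⟩) hcd.not_ge

lemma intervalIntegrable (hψ : IsRenewalSolution k h ψ) (hk : ContinuousOn k (Set.Ici 0))
    (hk0 : k 0 ≠ 0) (hh : ContinuousOn h (Set.Ici 0)) {u : ℝ} (hu : 0 < u) :
    IntervalIntegrable ψ volume 0 u := by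
  obtain ⟨M, hM⟩ := hψ.locallyBounded u hu
  rw [intervalIntegrable_iff_integrableOn_Ioc_of_le hu.le]
  exact Integrable.mono' (integrable_const M) (hψ.aestronglyMeasurable hk hk0 hh u)
    ((ae_restrict_mem measurableSet_Ioc).mono fun y hy => hM y (Set.Ioc_subset_Icc_self hy))

lemma continuousOn (hψ : IsRenewalSolution k h ψ) (hk : ContinuousOn k (Set.Ici 0))
    (hk0 : k 0 ≠ 0) (hk' : ∀ u, 0 < u → HasDerivAt k (k₁ u) u)
    (hk₁ : ∀ u, 0 < u → IntervalIntegrable k₁ volume 0 u) (hh : ContinuousOn h (Set.Ici 0)) :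
    ContinuousOn ψ (Set.Ici 0) :=
  (hh.add (continuousOn_causalConv hk hk' hk₁ fun _ => hψ.intervalIntegrable hk hk0 hh)).congr
    hψ.eq_add_causalConv

lemma exp_mul (hψ : IsRenewalSolution k h ψ) (ε : ℝ) :
    IsRenewalSolution (fun u => Real.exp (ε * u) * k u) (fun u => Real.exp (ε * u) * h u)
      (fun u => Real.exp (ε * u) * ψ u) where
  locallyBounded x hx := by
    obtain ⟨M, hM⟩ := hψ.locallyBounded x hx
    refine ⟨Real.exp (|ε| * x) * M, fun u hu => ?_⟩
    rw [abs_mul, Real.abs_exp]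
    gcongr
    · exact hu.1
    · exact le_abs_self ε
    · exact hu.2
    · exact hM u hu
  eq_add_causalConv u hu := by
    have hconv : causalConv (fun u => Real.exp (ε * u) * k u) (fun u => Real.exp (ε * u) * ψ u) u
        = Real.exp (ε * u) * causalConv k ψ u := by
      rw [causalConv, causalConv, ← intervalIntegral.integral_const_mul]
      congr 1 with y
      rw [mul_mul_mul_comm, ← Real.exp_add]
      congr 3
      ring
    rw [hψ.eq_add_causalConv u hu, hconv, mul_add]

lemma abs_le_add_mul {q H M x u : ℝ} (hψ : IsRenewalSolution k h ψ)
    (hk : IntegrableOn k (Set.Ioi 0)) (hq : ∫ y in Set.Ioi 0, |k y| ≤ q)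
    (hH : ∀ u, 0 ≤ u → |h u| ≤ H) (hM : ∀ v ∈ Set.Icc 0 x, |ψ v| ≤ M) (hu : u ∈ Set.Icc 0 x) :
    |ψ u| ≤ H + q * M := by
  have hM0 : 0 ≤ M := (abs_nonneg _).trans (hM u hu)
  have hmass : ∫ y in (0 : ℝ)..u, |k y| ≤ q := by
    rw [intervalIntegral.integral_of_le hu.1]
    exact (setIntegral_mono_set hk.abs (Eventually.of_forall fun y => abs_nonneg _)
      Set.Ioc_subset_Ioi_self.eventuallyLE).trans hq
  have hconv : |causalConv k ψ u| ≤ ∫ y in (0 : ℝ)..u, |k y| * M := by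
    rw [causalConv_comm, causalConv, ← Real.norm_eq_abs]
    refine intervalIntegral.norm_integral_le_of_norm_le hu.1 (Eventually.of_forall fun y hy => ?_)
      ((intervalIntegrable_iff_integrableOn_Ioc_of_le hu.1).2
        ((hk.mono_set Set.Ioc_subset_Ioi_self).abs.mul_const M))
    rw [norm_mul, mul_comm]
    exact mul_le_mul_of_nonneg_left
      (hM _ ⟨sub_nonneg.2 hy.2, by linarith [hy.1, hu.2]⟩) (abs_nonneg _)
  rw [intervalIntegral.integral_mul_const] at hconv
  rw [hψ.eq_add_causalConv u hu.1]
  exact (abs_add_le _ _).trans (add_le_add (hH u hu.1)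
    (hconv.trans (mul_le_mul_of_nonneg_right hmass hM0)))

lemma abs_le_div {q H u : ℝ} (hψ : IsRenewalSolution k h ψ)
    (hk : IntegrableOn k (Set.Ioi 0)) (hq : ∫ y in Set.Ioi 0, |k y| ≤ q) (hq1 : q < 1)
    (hH : ∀ u, 0 ≤ u → |h u| ≤ H) (hu : 0 ≤ u) : |ψ u| ≤ H / (1 - q) := by
  have hu_mem : u ∈ Set.Icc 0 (u + 1) := ⟨hu, (lt_add_one u).le⟩
  let A := (fun v => |ψ v|) '' Set.Icc 0 (u + 1)
  have hA_bdd : BddAbove A := by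
    obtain ⟨M, hM⟩ := hψ.locallyBounded (u + 1) (by linarith)
    exact ⟨M, Set.forall_mem_image.2 hM⟩
  have hle_sup : ∀ v ∈ Set.Icc 0 (u + 1), |ψ v| ≤ sSup A := fun v hv =>
    le_csSup hA_bdd (Set.mem_image_of_mem _ hv)
  have hsup : sSup A ≤ H + q * sSup A :=
    csSup_le ⟨_, Set.mem_image_of_mem _ hu_mem⟩
      (Set.forall_mem_image.2 fun v hv => hψ.abs_le_add_mul hk hq hH hle_sup hv)
  refine (hle_sup u hu_mem).trans ((le_div_iff₀ (sub_pos.2 hq1)).2 ?_)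
  linarith

end IsRenewalSolution

namespace ExpDecay

variable {k : ℝ → ℝ}

lemma exists_abs_exp_mul_le (hk : ExpDecay k) :
    ∃ C δ : ℝ, 0 < δ ∧ ∀ ε < δ, ∀ u, 0 < u →
      |Real.exp (ε * u) * k u| ≤ C * Real.exp (-δ * u) := by
  obtain ⟨-, C, δ, hδ, hle⟩ := hk
  refine ⟨C, δ / 2, half_pos hδ, fun ε hε u hu => ?_⟩
  calc |Real.exp (ε * u) * k u|
      ≤ Real.exp (δ / 2 * u) * (C * Real.exp (-δ * u)) := by
        rw [abs_mul, Real.abs_exp]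
        gcongr
        exact hle u hu
    _ = C * (Real.exp (δ / 2 * u) * Real.exp (-δ * u)) := by ring
    _ = C * Real.exp (-(δ / 2) * u) := by
        rw [← Real.exp_add]
        congr 2
        ring

lemma eventually_exp_mul (hk : ExpDecay k) :
    ∀ᶠ ε in 𝓝 0, ExpDecay fun u => Real.exp (ε * u) * k u := by
  obtain ⟨C, δ, hδ, hle⟩ := hk.exists_abs_exp_mul_le
  filter_upwards [gt_mem_nhds hδ] with ε hε
  exact ⟨ContinuousOn.mul (by fun_prop) hk.continuousOn, C, δ, hδ, hle ε hε⟩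

lemma eventually_setIntegral_abs_exp_mul_lt {q : ℝ} (hk : ExpDecay k)
    (hq : ∫ y in Set.Ioi 0, |k y| < q) :
    ∀ᶠ ε in 𝓝 0, ∫ y in Set.Ioi 0, |Real.exp (ε * y) * k y| < q := by
  obtain ⟨C, δ, hδ, hle⟩ := hk.exists_abs_exp_mul_le
  have hcont : ContinuousAt (fun ε => ∫ y in Set.Ioi 0, |Real.exp (ε * y) * k y|) 0 := by
    refine continuousAt_of_dominated (bound := fun u => C * Real.exp (-δ * u)) ?_ ?_
      ((integrableOn_exp_mul_Ioi (neg_lt_zero.2 hδ) 0).const_mul C)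
      (Eventually.of_forall fun u => by fun_prop)
    · filter_upwards [hk.eventually_exp_mul] with ε hε
      exact hε.integrableOn.abs.aestronglyMeasurable
    · filter_upwards [gt_mem_nhds hδ] with ε hε
      filter_upwards [ae_restrict_mem measurableSet_Ioi] with u hu
      rw [Real.norm_eq_abs, abs_abs]
      exact hle ε hε u hu
  exact hcont.eventually_lt_const (by simpa using hq)

end ExpDecay

lemma EulerExpDecay.of_hasDerivAt {n : ℕ} {g g₁ : ℝ → ℝ} (hg : ExpDecay g)
    (hg₁ : EulerExpDecay n g₁) (hderiv : ∀ u, 0 < u → HasDerivAt g (g₁ u) u) :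
    EulerExpDecay (n + 1) g :=
  ⟨hg, _, hg₁.id_mul, fun u hu =>
    (hderiv u hu).congr_deriv (mul_div_cancel_left₀ (g₁ u) hu.ne').symm⟩

/-- The derivative of a solution `ψ` of `ψ = h + k ⋆ ψ`, where `k₁ = k'` and `h₁ = h'`. -/
noncomputable def renewalDeriv (k k₁ h₁ ψ : ℝ → ℝ) (u : ℝ) : ℝ :=
  h₁ u + (k 0 * ψ u + causalConv k₁ ψ u)

namespace IsRenewalSolution

variable {k h ψ k₁ h₁ h₂ : ℝ → ℝ} {n : ℕ}

/- Exponential tilting turns the equation into one with the kernel `exp (ε u) k u`, whose total mass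
is still less than one for small `ε`. -/
lemma expDecay (hψ : IsRenewalSolution k h ψ) (hk : ExpDecay k)
    (hmass : ∫ y in Set.Ioi 0, |k y| < 1) (hh : ExpDecay h) (hcont : ContinuousOn ψ (Set.Ioi 0)) :
    ExpDecay ψ := by
  have htilt := (hk.eventually_exp_mul.and
    ((hk.eventually_setIntegral_abs_exp_mul_lt hmass).and hh.eventually_exp_mul)).filter_mono
    (nhdsWithin_le_nhds (s := Set.Ioi 0))
  obtain ⟨ε, ⟨hkε, hmassε, hhε⟩, hε⟩ := (htilt.and self_mem_nhdsWithin).exists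
  obtain ⟨H, hH⟩ := hhε.exists_abs_le
  have hH_max : ∀ u, 0 ≤ u → |Real.exp (ε * u) * h u| ≤ max H |h 0| := fun u hu => by
    rcases hu.eq_or_lt with rfl | hu
    · simp
    · exact (hH u hu).trans (le_max_left _ _)
  refine ⟨hcont, max H |h 0| / (1 - ∫ y in Set.Ioi 0, |Real.exp (ε * y) * k y|), ε, hε,
    fun u hu => ?_⟩
  have hle := (hψ.exp_mul ε).abs_le_div hkε.integrableOn le_rfl hmassε hH_max hu.le
  rw [abs_mul, Real.abs_exp] at hle
  rw [neg_mul, Real.exp_neg, ← div_eq_mul_inv, le_div_iff₀' (Real.exp_pos _)]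
  exact hle

lemma hasDerivAt {u : ℝ} (hψ : IsRenewalSolution k h ψ) (hk : ContinuousOn k (Set.Ici 0))
    (hk' : ∀ u, 0 < u → HasDerivAt k (k₁ u) u) (hh' : ∀ u, 0 < u → HasDerivAt h (h₁ u) u)
    (hk₁ : ExpDecay k₁) (hψ_decay : ExpDecay ψ) (hu : 0 < u) :
    HasDerivAt ψ (renewalDeriv k k₁ h₁ ψ u) u := by
  refine ((hh' u hu).add (hasDerivAt_causalConv hk hk' hk₁ hψ_decay hu)).congr_of_eventuallyEq ?_
  filter_upwards [lt_mem_nhds hu] with v hv using hψ.eq_add_causalConv v hv.le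

lemma eulerExpDecay (hψ : IsRenewalSolution k h ψ) (hk : ContinuousOn k (Set.Ici 0))
    (hk' : ∀ u, 0 < u → HasDerivAt k (k₁ u) u) (hh' : ∀ u, 0 < u → HasDerivAt h (h₁ u) u)
    (hk₁ : EulerExpDecay n k₁) (hh₁ : EulerExpDecay n h₁) (hψ_decay : ExpDecay ψ) :
    EulerExpDecay (n + 1) ψ := by
  have hderiv := fun u hu => hψ.hasDerivAt (u := u) hk hk' hh' hk₁.expDecay hψ_decay hu
  have hstep : ∀ m, EulerExpDecay m k₁ → EulerExpDecay m h₁ → EulerExpDecay m ψ →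
      EulerExpDecay (m + 1) ψ := fun m hk₁ hh₁ hψm =>
    .of_hasDerivAt hψ_decay (hh₁.add ((hψm.const_mul _).add (hk₁.causalConv hψm))) hderiv
  clear hderiv
  induction n with
  | zero => exact hstep 0 hk₁ hh₁ hψ_decay
  | succ n ih => exact hstep _ hk₁ hh₁ (ih hk₁.of_succ hh₁.of_succ)

/- The Leibniz rule differentiates one factor only: in `k₁ ⋆ ψ` it is applied to `ψ`, which is
continuous at the origin, while `k₁` may fail to be differentiable there. -/
lemma exists_eulerExpDecay_hasDerivAt (hψ : IsRenewalSolution k h ψ)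
    (hk : ContinuousOn k (Set.Ici 0)) (hk' : ∀ u, 0 < u → HasDerivAt k (k₁ u) u)
    (hk₁ : EulerExpDecay n k₁) (hh₁ : ExpDecay h₁) (hh₂ : EulerExpDecay n h₂)
    (hh' : ∀ u, 0 < u → HasDerivAt h (h₁ u) u) (hh₁' : ∀ u, 0 < u → HasDerivAt h₁ (h₂ u) u)
    (hψ_cont : ContinuousOn ψ (Set.Ici 0)) (hψ_decay : ExpDecay ψ) :
    ∃ ψ₁ ψ₂, EulerExpDecay n ψ₂ ∧ (∀ u, 0 < u → HasDerivAt ψ (ψ₁ u) u) ∧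
      ∀ u, 0 < u → HasDerivAt ψ₁ (ψ₂ u) u := by
  have hh₁_euler : EulerExpDecay n h₁ := (EulerExpDecay.of_hasDerivAt hh₁ hh₂ hh₁').of_succ
  have hψ' : ∀ u, 0 < u → HasDerivAt ψ (renewalDeriv k k₁ h₁ ψ u) u :=
    fun u hu => hψ.hasDerivAt hk hk' hh' hk₁.expDecay hψ_decay hu
  have hψ_euler : EulerExpDecay n ψ :=
    (hψ.eulerExpDecay hk hk' hh' hk₁ hh₁_euler hψ_decay).of_succ
  have hψ₁ : EulerExpDecay n (renewalDeriv k k₁ h₁ ψ) :=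
    hh₁_euler.add ((hψ_euler.const_mul _).add (hk₁.causalConv hψ_euler))
  refine ⟨renewalDeriv k k₁ h₁ ψ, _,
    hh₂.add ((hψ₁.const_mul _).add ((hk₁.const_mul (ψ 0)).add (hψ₁.causalConv hk₁))), hψ',
    fun u hu => (hh₁' u hu).add (((hψ' u hu).const_mul (k 0)).add ?_)⟩
  rw [causalConv_comm k₁ ψ]
  exact hasDerivAt_causalConv hψ_cont hψ' hψ₁.expDecay hk₁.expDecay hu

end IsRenewalSolution

lemma IsClassD1.of_eulerExpDecay {ψ ψ₁ ψ₂ : ℝ → ℝ} (hψ : ContinuousOn ψ (Set.Ici 0))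
    (hψ' : ∀ u, 0 < u → HasDerivAt ψ (ψ₁ u) u) (hψ₁' : ∀ u, 0 < u → HasDerivAt ψ₁ (ψ₂ u) u)
    (hψ₂ : EulerExpDecay 2 ψ₂) : IsClassD1 ψ := by
  have hderiv : Set.EqOn (deriv ψ) ψ₁ (Set.Ioi 0) := fun u hu => (hψ' u hu).deriv
  have hderiv₂ : Set.EqOn (deriv (deriv ψ)) ψ₂ (Set.Ioi 0) :=
    (hderiv.deriv isOpen_Ioi).trans fun u hu => (hψ₁' u hu).deriv
  have hpow (j : ℕ) (hj : EulerExpDecay (0 + j) ψ₂) :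
      ∃ C, ∀ u, 0 < u → |u ^ j * iteratedDeriv (j + 2) ψ u| ≤ C := by
    obtain ⟨C, hC⟩ := hj.pow_mul_iteratedDeriv.expDecay.exists_abs_le
    refine ⟨C, fun u hu => ?_⟩
    rw [iteratedDeriv_succ', iteratedDeriv_succ', hderiv₂.iteratedDeriv_of_isOpen isOpen_Ioi j hu]
    exact hC u hu
  obtain ⟨C₀, hC₀⟩ := hpow 0 hψ₂.of_succ.of_succ
  obtain ⟨C₁, hC₁⟩ := hpow 1 hψ₂.of_succ
  obtain ⟨C₂, hC₂⟩ := hpow 2 hψ₂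
  have hψ₁_smooth : ContDiffOn ℝ (2 + 1) ψ₁ (Set.Ioi 0) :=
    (contDiffOn_succ_iff_deriv_of_isOpen isOpen_Ioi).2
      ⟨fun u hu => (hψ₁' u hu).differentiableAt.differentiableWithinAt, by simp,
        hψ₂.contDiffOn.congr fun u hu => (hψ₁' u hu).deriv⟩
  have hψ_smooth : ContDiffOn ℝ (2 + 1 + 1) ψ (Set.Ioi 0) :=
    (contDiffOn_succ_iff_deriv_of_isOpen isOpen_Ioi).2
      ⟨fun u hu => (hψ' u hu).differentiableAt.differentiableWithinAt, by simp,
        hψ₁_smooth.congr hderiv⟩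
  exact
    { continuousOn := hψ
      contDiffOn := hψ_smooth.of_le (by norm_num)
      posSup_two := posSup_lt_top_of_abs_le fun u hu => by simpa using hC₀ u hu
      posSup_three := posSup_lt_top_of_abs_le fun u hu => by simpa using hC₁ u hu
      posSup_four := posSup_lt_top_of_abs_le hC₂ }

lemma IsRenewalSolution.isClassD1 {k k₁ h h₁ h₂ ψ : ℝ → ℝ} (hψ : IsRenewalSolution k h ψ)
    (hk_cont : ContinuousOn k (Set.Ici 0)) (hk0 : k 0 ≠ 0) (hk : ExpDecay k)
    (hmass : ∫ y in Set.Ioi 0, |k y| < 1) (hk' : ∀ u, 0 < u → HasDerivAt k (k₁ u) u)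
    (hk₁ : EulerExpDecay 2 k₁) (hh_cont : ContinuousOn h (Set.Ici 0)) (hh : ExpDecay h)
    (hh' : ∀ u, 0 < u → HasDerivAt h (h₁ u) u) (hh₁ : ExpDecay h₁)
    (hh₁' : ∀ u, 0 < u → HasDerivAt h₁ (h₂ u) u) (hh₂ : EulerExpDecay 2 h₂) : IsClassD1 ψ := by
  have hcont : ContinuousOn ψ (Set.Ici 0) :=
    hψ.continuousOn hk_cont hk0 hk' (fun _ hu => hk₁.expDecay.intervalIntegrable hu.le) hh_cont
  have hdecay : ExpDecay ψ := hψ.expDecay hk hmass hh (hcont.mono Set.Ioi_subset_Ici_self)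
  obtain ⟨ψ₁, ψ₂, hψ₂, hψ', hψ₁'⟩ :=
    hψ.exists_eulerExpDecay_hasDerivAt hk_cont hk' hk₁ hh₁ hh₂ hh' hh₁' hcont hdecay
  exact .of_eulerExpDecay hcont hψ' hψ₁' hψ₂

/-! ### Ruin probabilities -/

/-- The integral of `f` over the half-line to the right of `u`: the survival function of the
distribution with density `f`. -/
noncomputable def tailIntegral (f : ℝ → ℝ) (u : ℝ) : ℝ := ∫ y in Set.Ioi u, f y

namespace ExpDecay

variable {f : ℝ → ℝ} {u : ℝ}

lemma tailIntegral_eq_sub (hf : ExpDecay f) (hu : 0 ≤ u) :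
    tailIntegral f u = tailIntegral f 0 - ∫ y in (0 : ℝ)..u, f y := by
  rw [tailIntegral, tailIntegral, ← intervalIntegral.integral_Ioi_sub_Ioi hf.integrableOn hu,
    sub_sub_cancel]

lemma continuousOn_tailIntegral (hf : ExpDecay f) :
    ContinuousOn (tailIntegral f) (Set.Ici 0) :=
  (continuousOn_const.sub (continuousOn_primitive_Ici fun _ hu =>
    hf.intervalIntegrable hu.le)).congr fun _ hu => hf.tailIntegral_eq_sub hu

lemma hasDerivAt_tailIntegral (hf : ExpDecay f) (hu : 0 < u) :
    HasDerivAt (tailIntegral f) (-f u) u := by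
  have hprimitive := intervalIntegral.integral_hasDerivAt_right (hf.intervalIntegrable hu.le)
    ⟨Set.Ioi 0, Ioi_mem_nhds hu, hf.integrableOn.aestronglyMeasurable⟩
    (hf.continuousOn.continuousAt (Ioi_mem_nhds hu))
  refine (hprimitive.const_sub (tailIntegral f 0)).congr_of_eventuallyEq ?_
  filter_upwards [lt_mem_nhds hu] with v hv using hf.tailIntegral_eq_sub hv.le

lemma tendsto_atTop (hf : ExpDecay f) : Tendsto f atTop (𝓝 0) := by
  obtain ⟨-, C, ε, hε, hle⟩ := hf
  have hexp : Tendsto (fun u => Real.exp (-ε * u)) atTop (𝓝 0) :=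
    Real.tendsto_exp_atBot.comp (tendsto_id.const_mul_atTop_of_neg (neg_lt_zero.2 hε))
  refine squeeze_zero_norm' ?_ (by simpa only [mul_zero] using hexp.const_mul C)
  filter_upwards [eventually_gt_atTop 0] with u hu using (hle u hu)

lemma setIntegral_id_mul_pos (hf : ExpDecay f) (hf_nonneg : ∀ y, 0 < y → 0 ≤ f y)
    (hmass : 0 < ∫ y in Set.Ioi 0, f y) : 0 < ∫ y in Set.Ioi 0, y * f y := by
  have hf_ae : 0 ≤ᵐ[volume.restrict (Set.Ioi 0)] f := by
    filter_upwards [ae_restrict_mem measurableSet_Ioi] with y hy using hf_nonneg y hy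
  have hid_ae : 0 ≤ᵐ[volume.restrict (Set.Ioi 0)] fun y => y * f y := by
    filter_upwards [ae_restrict_mem measurableSet_Ioi] with y hy
    exact mul_nonneg (le_of_lt hy) (hf_nonneg y hy)
  rw [setIntegral_pos_iff_support_of_nonneg_ae hf_ae hf.integrableOn] at hmass
  rw [setIntegral_pos_iff_support_of_nonneg_ae hid_ae hf.id_mul.integrableOn]
  convert hmass using 2
  ext y
  simp +contextual [ne_of_gt]

lemma tailIntegral (hf : ExpDecay f) : ExpDecay (tailIntegral f) := by
  refine ⟨hf.continuousOn_tailIntegral.mono Set.Ioi_subset_Ici_self, ?_⟩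
  obtain ⟨-, C, ε, hε, hle⟩ := hf
  refine ⟨C / ε, ε, hε, fun u hu => ?_⟩
  calc |∫ y in Set.Ioi u, f y| ≤ ∫ y in Set.Ioi u, C * Real.exp (-ε * y) :=
        norm_integral_le_of_norm_le (f := f)
          ((integrableOn_exp_mul_Ioi (neg_lt_zero.2 hε) u).const_mul C)
          ((ae_restrict_mem measurableSet_Ioi).mono fun y hy => hle y (hu.trans hy))
    _ = C / ε * Real.exp (-ε * u) := by
        rw [integral_const_mul, integral_exp_mul_Ioi (neg_lt_zero.2 hε)]
        field_simp

end ExpDecay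

lemma setIntegral_tailIntegral {f : ℝ → ℝ} (hf : ExpDecay f) :
    ∫ u in Set.Ioi 0, tailIntegral f u = ∫ u in Set.Ioi 0, u * f u := by
  have hderiv : ∀ u ∈ Set.Ioi (0 : ℝ), HasDerivAt (fun v => v * tailIntegral f v)
      (tailIntegral f u - u * f u) u := fun u hu =>
    ((hasDerivAt_id u).mul (hf.hasDerivAt_tailIntegral hu)).congr_deriv (by simp; ring)
  have hcont : ContinuousWithinAt (fun v => v * tailIntegral f v) (Set.Ici 0) 0 :=
    continuousWithinAt_id.mul (hf.continuousOn_tailIntegral 0 Set.self_mem_Ici)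
  have hparts := integral_Ioi_of_hasDerivAt_of_tendsto hcont hderiv
    (hf.tailIntegral.integrableOn.sub hf.id_mul.integrableOn) hf.tailIntegral.id_mul.tendsto_atTop
  rw [integral_sub hf.tailIntegral.integrableOn hf.id_mul.integrableOn, zero_mul, sub_zero,
    sub_eq_zero] at hparts
  exact hparts

lemma tailIntegral_nonneg {f : ℝ → ℝ} (hf : ∀ y, 0 < y → 0 ≤ f y) {u : ℝ} (hu : 0 ≤ u) :
    0 ≤ tailIntegral f u :=
  setIntegral_nonneg measurableSet_Ioi fun y hy => hf y (hu.trans_lt hy)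

lemma IsRenewalSolution.isClassD1_of_tailIntegral {f ψ : ℝ → ℝ} {c : ℝ}
    (hψ : IsRenewalSolution (fun u => c * tailIntegral f u)
      (fun u => c * tailIntegral (tailIntegral f) u) ψ)
    (hf : EulerExpDecay 2 f) (hf_nonneg : ∀ y, 0 < y → 0 ≤ f y)
    (hf0 : tailIntegral f 0 ≠ 0) (hc : 0 < c) (hmass : c * ∫ y in Set.Ioi 0, y * f y < 1) :
    IsClassD1 ψ := by
  have hf_decay := hf.expDecay
  have htail := hf_decay.tailIntegral
  refine hψ.isClassD1 (k₁ := fun u => c * -f u) (h₁ := fun u => c * -tailIntegral f u)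
    (h₂ := fun u => c * - -f u)
    (continuousOn_const.mul hf_decay.continuousOn_tailIntegral) (mul_ne_zero hc.ne' hf0)
    (htail.const_mul c) ?_ (fun u hu => (hf_decay.hasDerivAt_tailIntegral hu).const_mul c) ?_
    (continuousOn_const.mul htail.continuousOn_tailIntegral) (htail.tailIntegral.const_mul c)
    (fun u hu => (htail.hasDerivAt_tailIntegral hu).const_mul c) ?_
    (fun u hu => (hf_decay.hasDerivAt_tailIntegral hu).fun_neg.const_mul c) ?_
  · refine lt_of_eq_of_lt ?_ hmass
    rw [← setIntegral_tailIntegral hf_decay, ← integral_const_mul]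
    refine setIntegral_congr_fun measurableSet_Ioi fun u hu => ?_
    exact abs_of_nonneg (mul_nonneg hc.le (tailIntegral_nonneg hf_nonneg (le_of_lt hu)))
  · exact (hf.const_mul (-c)).congr fun u _ => by ring
  · exact (htail.const_mul (-c)).congr fun u _ => by ring
  · exact (hf.const_mul c).congr fun u _ => by ring

lemma isRenewalSolution_tailIntegral {f F ψ : ℝ → ℝ} {φ μ : ℝ}
    (hF : ∀ u, 0 ≤ u → 1 - F u = tailIntegral f u)
    (hψ_loc : ∀ x : ℝ, 0 < x → ∃ M, ∀ u ∈ Set.Icc (0 : ℝ) x, |ψ u| ≤ M)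
    (hψ_eq : ∀ u : ℝ, 0 ≤ u →
      ψ u = φ * ((∫ y in (0 : ℝ)..u, ψ (u - y) * ((1 - F y) / μ))
        + ∫ y in Set.Ioi u, (1 - F y) / μ)) :
    IsRenewalSolution (fun u => φ / μ * tailIntegral f u)
      (fun u => φ / μ * tailIntegral (tailIntegral f) u) ψ where
  locallyBounded := hψ_loc
  eq_add_causalConv u hu := by
    have hconv : ∫ y in (0 : ℝ)..u, ψ (u - y) * ((1 - F y) / μ)
        = ∫ y in (0 : ℝ)..u, ψ (u - y) * tailIntegral f y / μ :=
      intervalIntegral.integral_congr fun y hy => by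
        rw [Set.uIcc_of_le hu] at hy
        simp only [hF y hy.1, mul_div_assoc]
    have htail : ∫ y in Set.Ioi u, (1 - F y) / μ = ∫ y in Set.Ioi u, tailIntegral f y / μ :=
      setIntegral_congr_fun measurableSet_Ioi fun y hy => by
        simp only [hF y (hu.trans (le_of_lt hy))]
    rw [hψ_eq u hu, hconv, htail, integral_div, intervalIntegral.integral_div, causalConv_comm,
      causalConv, tailIntegral]
    simp only [mul_left_comm (ψ _), intervalIntegral.integral_const_mul]
    ring

theorem stmt_16_general {f : ℝ → ℝ} (hf : EulerExpDecay 2 f) (hf_nonneg : ∀ y, 0 < y → 0 ≤ f y)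
    (hf_one : ∫ y in Set.Ioi 0, f y = 1) {φ : ℝ} (hφ0 : 0 < φ) (hφ1 : φ < 1)
    {F_X : ℝ → ℝ} (hFX : ∀ u, 0 ≤ u → F_X u = ∫ y in (0 : ℝ)..u, f y)
    {μ : ℝ} (hμ : μ = ∫ y in Set.Ioi 0, y * f y) {ψ : ℝ → ℝ}
    (hψ_loc : ∀ x : ℝ, 0 < x → ∃ M, ∀ u ∈ Set.Icc (0 : ℝ) x, |ψ u| ≤ M)
    (hψ_eq : ∀ u : ℝ, 0 ≤ u →
      ψ u = φ * ((∫ y in (0 : ℝ)..u, ψ (u - y) * ((1 - F_X y) / μ))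
        + ∫ y in Set.Ioi u, (1 - F_X y) / μ)) :
    IsClassD1 ψ ∧ ∀ t : ℝ, 0 < t →
      (⨆ u ∈ Set.Ici (0 : ℝ), (‖Mt2 t ψ u - ψ u‖₊ : ℝ≥0∞)) ≤ accelBound t ψ ∧
        accelBound t ψ < ⊤ := by
  have hμ0 : 0 < μ := hμ ▸ hf.expDecay.setIntegral_id_mul_pos hf_nonneg (hf_one ▸ one_pos)
  have hmass : φ / μ * ∫ y in Set.Ioi 0, y * f y < 1 := by
    rwa [← hμ, div_mul_cancel₀ φ hμ0.ne']
  have hsurvival : ∀ u, 0 ≤ u → 1 - F_X u = tailIntegral f u := fun u hu => by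
    rw [hFX u hu, hf.expDecay.tailIntegral_eq_sub hu, tailIntegral, hf_one]
  have hψ : IsClassD1 ψ :=
    (isRenewalSolution_tailIntegral hsurvival hψ_loc hψ_eq).isClassD1_of_tailIntegral hf hf_nonneg
      (hf_one.trans_ne one_ne_zero) (div_pos hφ0 hμ0) hmass
  exact ⟨hψ, fun t ht => ⟨hψ.iSup_Mt2_sub_le ht, hψ.accelBound_lt_top⟩⟩

/-! ### Gamma mixtures -/

section GammaDensity

variable {a r u : ℝ}

lemma gammaPDFReal_of_pos (hu : 0 < u) :
    gammaPDFReal a r u = r ^ a / Real.Gamma a * (u ^ (a - 1) * Real.exp (-r * u)) := by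
  rw [gammaPDFReal, if_pos hu.le, mul_assoc, neg_mul]

lemma hasDerivAt_gammaPDFReal (hu : 0 < u) :
    HasDerivAt (gammaPDFReal a r)
      (((a - 1) * gammaPDFReal a r u + -r * (u * gammaPDFReal a r u)) / u) u := by
  have hpow := Real.hasDerivAt_rpow_const (x := u) (p := a - 1) (.inl hu.ne')
  have hexp := ((hasDerivAt_id u).const_mul (-r)).exp
  have hderiv := (hpow.mul hexp).const_mul (r ^ a / Real.Gamma a)
  refine (hderiv.congr_of_eventuallyEq ?_).congr_deriv ?_
  · filter_upwards [lt_mem_nhds hu] with v hv using gammaPDFReal_of_pos hv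
  · rw [gammaPDFReal_of_pos hu, Real.rpow_sub_one hu.ne']
    simp only [id_eq]
    field_simp

lemma expDecay_gammaPDFReal (ha : 1 ≤ a) (hr : 0 < r) : ExpDecay (gammaPDFReal a r) := by
  have hexp : ExpDecay fun u => Real.exp (-r * u) :=
    ⟨by fun_prop, 1, r, hr, fun u _ => by rw [Real.abs_exp, one_mul]⟩
  exact ((hexp.rpow_mul (sub_nonneg.2 ha)).const_mul (r ^ a / Real.Gamma a)).congr
    fun u hu => gammaPDFReal_of_pos hu

lemma eulerExpDecay_gammaPDFReal (ha : 1 ≤ a) (hr : 0 < r) (n : ℕ) :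
    EulerExpDecay n (gammaPDFReal a r) := by
  induction n with
  | zero => exact expDecay_gammaPDFReal ha hr
  | succ n ih =>
    exact ⟨expDecay_gammaPDFReal ha hr, _, (ih.const_mul (a - 1)).add (ih.id_mul.const_mul (-r)),
      fun u hu => hasDerivAt_gammaPDFReal hu⟩

lemma setIntegral_gammaPDFReal (ha : 0 < a) (hr : 0 < r) :
    ∫ y in Set.Ioi 0, gammaPDFReal a r y = 1 := by
  have := isProbabilityMeasure_gammaMeasure ha hr
  simpa using (integral_gammaMeasure ha hr fun _ => 1).symm

lemma integrableOn_gammaPDFReal (ha : 0 < a) (hr : 0 < r) :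
    IntegrableOn (gammaPDFReal a r) (Set.Ioi 0) := by
  simpa only [pow_zero, one_mul] using
    (integrable_gammaMeasure_iff ha hr).1 (integrable_pow_gammaMeasure ha hr 0)

lemma integrableOn_id_mul_gammaPDFReal (ha : 0 < a) (hr : 0 < r) :
    IntegrableOn (fun y => y * gammaPDFReal a r y) (Set.Ioi 0) := by
  simpa only [pow_one] using
    (integrable_gammaMeasure_iff ha hr).1 (integrable_pow_gammaMeasure ha hr 1)

lemma gammaCDF_eq_integral_gammaPDFReal (hu : 0 ≤ u) :
    gammaCDF a r u = ∫ y in (0 : ℝ)..u, gammaPDFReal a r y :=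
  intervalIntegral.integral_congr_uIoo fun y hy => by
    rw [Set.uIoo_of_le hu] at hy
    rw [gammaPDFReal_of_pos hy.1]
    ring

end GammaDensity

/-- The density of the mixture of the `Gamma(a i, b i)` distributions with weights `p i`. -/
noncomputable def gammaMixturePDF {ι : Type*} [Fintype ι] (p a b : ι → ℝ) (y : ℝ) : ℝ :=
  ∑ i, p i * gammaPDFReal (a i) (b i) y

section GammaMixture

variable {ι : Type*} [Fintype ι] {p a b : ι → ℝ}

lemma eulerExpDecay_gammaMixturePDF (ha : ∀ i, 1 ≤ a i) (hb : ∀ i, 0 < b i) (n : ℕ) :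
    EulerExpDecay n (gammaMixturePDF p a b) :=
  .sum _ fun i _ => (eulerExpDecay_gammaPDFReal (ha i) (hb i) n).const_mul (p i)

lemma gammaMixturePDF_nonneg (hp : ∀ i, 0 ≤ p i) (ha : ∀ i, 0 < a i) (hb : ∀ i, 0 < b i) (y : ℝ) :
    0 ≤ gammaMixturePDF p a b y :=
  Finset.sum_nonneg fun i _ => mul_nonneg (hp i) (gammaPDFReal_nonneg (ha i) (hb i) y)

lemma setIntegral_gammaMixturePDF (ha : ∀ i, 0 < a i) (hb : ∀ i, 0 < b i) :
    ∫ y in Set.Ioi 0, gammaMixturePDF p a b y = ∑ i, p i := by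
  simp only [gammaMixturePDF]
  rw [integral_finsetSum _ fun i _ => (integrableOn_gammaPDFReal (ha i) (hb i)).const_mul (p i)]
  simp only [integral_const_mul, setIntegral_gammaPDFReal (ha _) (hb _), mul_one]

lemma setIntegral_id_mul_gammaMixturePDF (ha : ∀ i, 0 < a i) (hb : ∀ i, 0 < b i) :
    ∫ y in Set.Ioi 0, y * gammaMixturePDF p a b y = ∑ i, p i * a i / b i := by
  simp only [gammaMixturePDF, Finset.mul_sum, mul_left_comm _ (p _)]
  rw [integral_finsetSum _ fun i _ =>
    (integrableOn_id_mul_gammaPDFReal (ha i) (hb i)).const_mul (p i)]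
  refine Finset.sum_congr rfl fun i _ => ?_
  rw [integral_const_mul, ← integral_gammaMeasure (ha i) (hb i),
    integral_id_gammaMeasure (ha i) (hb i), mul_div_assoc]

lemma sum_mul_gammaCDF_eq_integral (ha : ∀ i, 0 < a i) (hb : ∀ i, 0 < b i) {u : ℝ} (hu : 0 ≤ u) :
    ∑ i, p i * gammaCDF (a i) (b i) u = ∫ y in (0 : ℝ)..u, gammaMixturePDF p a b y := by
  simp only [gammaMixturePDF, gammaCDF_eq_integral_gammaPDFReal hu,
    intervalIntegral.integral_of_le hu]
  rw [integral_finsetSum _ fun i _ => ((integrableOn_gammaPDFReal (ha i) (hb i)).mono_set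
    Set.Ioc_subset_Ioi_self).const_mul (p i)]
  simp only [integral_const_mul]

end GammaMixture

/-- in the classical risk model whose claim amounts are a finite
mixture of `Gamma(αᵢ, βᵢ)` distributions with `αᵢ ≥ 1`, the ruin probability `ψ`
(the locally bounded solution of its defective renewal equation) belongs to `D₁`:
it is continuous on `[0,∞)`, four times continuously differentiable on `(0,∞)`,
with `‖ψ''‖, ‖u ψ'''(u)‖, ‖u² ψ⁗(u)‖ < ∞`; consequently for every `t > 0`,
`sup_{u≥0} |M_t^{[2]} ψ(u) - ψ(u)| ≤ ‖ψ''‖/(8t²) + ‖u ψ'''(u)‖/(6t²)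
 + 9 ‖u² ψ⁗(u)‖/(16t²) < ∞`. -/
theorem stmt_16 (n : ℕ) (hn : 0 < n) (p a b : Fin n → ℝ)
    (hp : ∀ i, 0 < p i) (hsum : ∑ i, p i = 1)
    (ha : ∀ i, 1 ≤ a i) (hb : ∀ i, 0 < b i)
    (φ : ℝ) (hφ0 : 0 < φ) (hφ1 : φ < 1)
    (F_X : ℝ → ℝ) (hFX : ∀ u : ℝ, F_X u = ∑ i, p i * gammaCDF (a i) (b i) u)
    (μ : ℝ) (hμ : μ = ∑ i, p i * a i / b i)
    (ψ : ℝ → ℝ)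
    (hψ_loc : ∀ x : ℝ, 0 < x → ∃ M, ∀ u ∈ Set.Icc (0:ℝ) x, |ψ u| ≤ M)
    (hψ_eq : ∀ u : ℝ, 0 ≤ u →
      ψ u = φ * ((∫ y in (0:ℝ)..u, ψ (u - y) * ((1 - F_X y) / μ))
        + ∫ y in Set.Ioi u, (1 - F_X y) / μ)) :
    ContinuousOn ψ (Set.Ici 0) ∧
    ContDiffOn ℝ 4 ψ (Set.Ioi 0) ∧
    (⨆ u ∈ Set.Ioi (0:ℝ), (‖iteratedDeriv 2 ψ u‖₊ : ℝ≥0∞)) < ⊤ ∧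
    (⨆ u ∈ Set.Ioi (0:ℝ), (‖u * iteratedDeriv 3 ψ u‖₊ : ℝ≥0∞)) < ⊤ ∧
    (⨆ u ∈ Set.Ioi (0:ℝ), (‖u ^ 2 * iteratedDeriv 4 ψ u‖₊ : ℝ≥0∞)) < ⊤ ∧
    ∀ t : ℝ, 0 < t →
      ∀ B : ℝ≥0∞,
        B = ENNReal.ofReal (1 / (8 * t ^ 2))
              * (⨆ u ∈ Set.Ioi (0:ℝ), (‖iteratedDeriv 2 ψ u‖₊ : ℝ≥0∞))
            + ENNReal.ofReal (1 / (6 * t ^ 2))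
              * (⨆ u ∈ Set.Ioi (0:ℝ), (‖u * iteratedDeriv 3 ψ u‖₊ : ℝ≥0∞))
            + ENNReal.ofReal (9 / (16 * t ^ 2))
              * (⨆ u ∈ Set.Ioi (0:ℝ), (‖u ^ 2 * iteratedDeriv 4 ψ u‖₊ : ℝ≥0∞)) →
        (⨆ u ∈ Set.Ici (0:ℝ), (‖Mt2 t ψ u - ψ u‖₊ : ℝ≥0∞)) ≤ B ∧ B < ⊤ := by
  have ha0 : ∀ i, 0 < a i := fun i => one_pos.trans_le (ha i)
  obtain ⟨hψ, herror⟩ := stmt_16_general (eulerExpDecay_gammaMixturePDF ha hb 2)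
    (fun y _ => gammaMixturePDF_nonneg (fun i => (hp i).le) ha0 hb y)
    ((setIntegral_gammaMixturePDF ha0 hb).trans hsum) hφ0 hφ1
    (fun u hu => (hFX u).trans (sum_mul_gammaCDF_eq_integral ha0 hb hu))
    (hμ.trans (setIntegral_id_mul_gammaMixturePDF ha0 hb).symm) hψ_loc hψ_eq
  exact ⟨hψ.continuousOn, hψ.contDiffOn, hψ.posSup_two, hψ.posSup_three, hψ.posSup_four,
    fun t ht _ hB => hB ▸ herror t ht⟩
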